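/- For any positive integers m and n, the Noether number of G = C_m ⋉_φ C_{mn} equals mn + m − 1. In particular β(G) = d(G) + 1, where d(G) = mn + m − 2 is the small Davenport constant. -/

import Mathlib

open MvPolynomial

/-- A sequence (multiset) over `G` is product-one if its terms can be ordered so
that their product equals `1`. -/
def IsProductOne {G : Type*} [Group G] (S : Multiset G) : Prop :=
  ∃ l : List G, (l : Multiset G) = S ∧ l.prod = 1

/-- A sequence is product-one free if it has no nonempty product-one subsequence. -/
def ProductOneFree {G : Type*} [Group G] (S : Multiset G) : Prop :=
  ∀ T ≤ S, T ≠ 0 → ¬ IsProductOne T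

/-- The action of a group element on polynomial functions, induced by a linear
representation `ρ` on the variables. -/
noncomputable def polyAct {F : Type*} [Field F] {G : Type*} [Group G] {d : ℕ}
    (ρ : G →* Matrix.GeneralLinearGroup (Fin d) F) (g : G)
    (f : MvPolynomial (Fin d) F) : MvPolynomial (Fin d) F :=
  MvPolynomial.aeval (fun i => ∑ j, ((ρ g).val i j) • (MvPolynomial.X j)) f

/-- A polynomial invariant of the representation `ρ`. -/
def IsPolyInvariant {F : Type*} [Field F] {G : Type*} [Group G] {d : ℕ}
    (ρ : G →* Matrix.GeneralLinearGroup (Fin d) F)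
    (f : MvPolynomial (Fin d) F) : Prop :=
  ∀ g : G, polyAct ρ g f = f

/-- `β(G, V) ≤ s`: the invariant ring is generated as an algebra by its
invariants of degree at most `s`. -/
def NoetherBoundLe {F : Type*} [Field F] {G : Type*} [Group G] {d : ℕ}
    (ρ : G →* Matrix.GeneralLinearGroup (Fin d) F) (s : ℕ) : Prop :=
  ∀ f : MvPolynomial (Fin d) F, IsPolyInvariant ρ f →
    f ∈ Algebra.adjoin F
      {h : MvPolynomial (Fin d) F | IsPolyInvariant ρ h ∧ h.totalDegree ≤ s}

/-!
Both upper bounds climb a chain of subgroups of `G = C_{mn} ⋊ C_m` whose successive quotients are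
`C_p × C_p` for primes `p` with product `m`. The steps from the top down take the prime factors of
`m` in increasing order: an automorphism of `C_p` whose order divides a number with smallest prime
factor `p` is trivial, so each quotient is a direct product. By Olson's theorem a sequence of length
`kp + p - 1` over `C_p × C_p` contains `k` disjoint zero-sum blocks, and a zero-sum sequence of
length `kp` splits into `k` of them. Applied to group elements this turns `km + m - 1` terms into
`k` blocks with product in the bottom group; if that group has order `n = k`, consecutive blocks
multiply to `1`. Applied to weights it turns the `(km)`-th power of the ideal of positive degree
into the `k`-th power of the `H`-invariants for a subgroup `H` of index `n`; if `k = n + 1`, a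
transfer argument over `G / H` shows that a `G`-invariant in this power is decomposable.

For the lower bounds let `a` and `b` generate the factors. The sequence `a ^ (mn - 1) b ^ (m - 1)`
is product-one free. Over the algebraic closure, `G` has the character `χ` of order `m` that kills
`C_{mn}`, and `C_{mn}` has a character `θ` of order `mn`. Extend `θ` by zero to a function on `G`
and evaluate two copies of the regular representation at `(x₀ θ, x₁ χ)`. This sends invariants to
polynomials in `x₀, x₁` whose monomials `x₀ ^ i x₁ ^ j` satisfy `mn ∣ i`, and `m ∣ j` if `i = 0`.
The monomial `x₀ ^ mn x₁ ^ (m - 1)` of degree `mn + m - 1` is not a product of two such monomials,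
and it occurs in the image of an orbit sum.
-/

section ZeroSum

theorem exists_multiset_le_card_eq {α : Type*} {S : Multiset α} {n : ℕ} (hn : n ≤ S.card) :
    ∃ T ≤ S, T.card = n := by
  obtain ⟨T, hT⟩ := Multiset.card_pos_iff_exists_mem.mp
    ((Nat.choose_pos hn).trans_eq (Multiset.card_powersetCard n S).symm)
  exact ⟨T, Multiset.mem_powersetCard.mp hT⟩

variable {p : ℕ} [Fact p.Prime] {V : Type*} [AddCommGroup V] [Module (ZMod p) V]
  [Module.Finite (ZMod p) V] {α : Type*}

theorem exists_subset_sum_eq_zero_of_finrank_mul_lt_card (s : Finset α) (f : α → V)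
    (hs : Module.finrank (ZMod p) V * (p - 1) < s.card) :
    ∃ t ⊆ s, t.Nonempty ∧ ∑ a ∈ t, f a = 0 := by
  classical
  have hp : p.Prime := Fact.out
  let b := Module.Free.chooseBasis (ZMod p) V
  -- `x` solves this system iff `{a | x a ≠ 0}` is zero-sum, since `x a ^ (p - 1)` is its indicator.
  let P : Module.Free.ChooseBasisIndex (ZMod p) V → MvPolynomial s (ZMod p) :=
    fun k => ∑ a : s, b.repr (f a) k • X a ^ (p - 1)
  have hdeg : ∑ k, (P k).totalDegree < Fintype.card s := calc
    ∑ k, (P k).totalDegree ≤ ∑ _k, (p - 1) := by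
      gcongr with k
      exact totalDegree_finsetSum_le fun a _ =>
        (totalDegree_smul_le ..).trans (totalDegree_X_pow ..).le
    _ < Fintype.card s := by simpa [← Module.finrank_eq_card_chooseBasisIndex] using hs
  let zero : {x : s → ZMod p // ∀ k, eval x (P k) = 0} :=
    ⟨0, fun k => by simp [P, hp.one_lt, tsub_eq_zero_iff_le]⟩
  have hcard := Nat.le_of_dvd (Fintype.card_pos_iff.mpr ⟨zero⟩)
    (char_dvd_card_solutions_of_fintype_sum_lt p hdeg)
  obtain ⟨x, hx⟩ := Fintype.exists_ne_of_one_lt_card (hp.one_lt.trans_le hcard) zero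
  refine ⟨({a | x.1 a ≠ 0} : Finset s).map ⟨(↑), Subtype.val_injective⟩, ?_, ?_, ?_⟩
  · simp +contextual [Finset.subset_iff]
  · rw [Finset.map_nonempty]
    obtain ⟨a, ha⟩ := Function.ne_iff.mp (Subtype.coe_ne_coe.mpr hx)
    exact ⟨a, by simpa [zero] using ha⟩
  · refine b.repr.map_eq_zero_iff.mp (Finsupp.ext fun k => ?_)
    simpa [P, ZMod.pow_card_sub_one, Finset.sum_filter, apply_ite fun v => b.repr v k] using x.2 k

theorem exists_le_map_sum_eq_zero_of_finrank_mul_lt_card (S : Multiset α) (f : α → V)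
    (hS : Module.finrank (ZMod p) V * (p - 1) < S.card) :
    ∃ T ≤ S, T ≠ 0 ∧ (T.map f).sum = 0 := by
  classical
  obtain ⟨t, ht, ht0, hsum⟩ := exists_subset_sum_eq_zero_of_finrank_mul_lt_card (p := p)
    S.toEnumFinset (fun x => f x.1) (by simpa using hS)
  refine ⟨t.1.map Prod.fst, Multiset.map_fst_le_of_subset_toEnumFinset ht, ?_, ?_⟩
  · simpa only [ne_eq, Multiset.map_eq_zero, Finset.val_eq_zero] using ht0.ne_empty
  · rw [Multiset.map_map]
    exact hsum

theorem exists_le_card_le_map_sum_eq_zero (hV : Module.finrank (ZMod p) V = 2)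
    (S : Multiset α) (f : α → V) (hS : 3 * (p - 1) < S.card) :
    ∃ T ≤ S, T ≠ 0 ∧ T.card ≤ p ∧ (T.map f).sum = 0 := by
  classical
  obtain ⟨S', hS'S, hS'card⟩ := exists_multiset_le_card_eq hS
  -- The extra coordinate `1` forces `p ∣ card T`.
  obtain ⟨T, hTS', hT0, hTsum⟩ := exists_le_map_sum_eq_zero_of_finrank_mul_lt_card (p := p) S'
    (fun a => (f a, (1 : ZMod p))) (by simp [hV]; omega)
  have hTf : (T.map f).sum = 0 := by
    simpa [Multiset.map_map] using
      (map_multiset_sum (AddMonoidHom.fst V (ZMod p)) _).symm.trans (congrArg Prod.fst hTsum)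
  have hpT : p ∣ T.card := by
    rw [← ZMod.natCast_eq_zero_iff]
    simpa [Multiset.map_map] using
      (map_multiset_sum (AddMonoidHom.snd V (ZMod p)) _).symm.trans (congrArg Prod.snd hTsum)
  have hTS := hTS'.trans hS'S
  have hp := (Fact.out : p.Prime).two_le
  obtain hTp | hTp := le_or_gt T.card p
  · exact ⟨T, hTS, hT0, hTp, hTf⟩
  have hTcard : T.card = 2 * p := by
    have hTle := Multiset.card_le_card hTS'
    obtain ⟨q, hq⟩ := hpT
    have : q < 3 := lt_of_mul_lt_mul_left (a := p) (by omega) p.zero_le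
    interval_cases q <;> omega
  obtain ⟨U, hUT, hUcard⟩ := exists_multiset_le_card_eq (S := T) (n := 2 * (p - 1) + 1) (by omega)
  obtain ⟨W, hWU, hW0, hWf⟩ :=
    exists_le_map_sum_eq_zero_of_finrank_mul_lt_card (p := p) U f (by rw [hV]; omega)
  have hWcard := Multiset.card_le_card hWU
  obtain ⟨W', rfl⟩ := Multiset.le_iff_exists_add.mp (hWU.trans hUT)
  rw [Multiset.card_add] at hTcard
  -- Either `W` or its complement in `T` is short enough.
  obtain hWp | hWp := le_or_gt W.card p
  · exact ⟨W, (Multiset.le_add_right ..).trans hTS, hW0, hWp, hWf⟩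
  · refine ⟨W', (Multiset.le_add_left ..).trans hTS, ?_, by omega, by simpa [hWf] using hTf⟩
    exact Multiset.card_pos.mp (by omega)

theorem exists_zeroSum_blocks (hV : Module.finrank (ZMod p) V = 2) (f : α → V) (k : ℕ)
    (S : Multiset α) (hS : k * p + p - 1 ≤ S.card) :
    ∃ L : Multiset (Multiset α), L.card = k ∧ L.sum ≤ S ∧ ∀ T ∈ L, T ≠ 0 ∧ (T.map f).sum = 0 := by
  have hp := (Fact.out : p.Prime).two_le
  induction k using Nat.twoStepInduction generalizing S with
  | zero => exact ⟨0, by simp⟩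
  | one =>
    obtain ⟨T, hTS, hT⟩ :=
      exists_le_map_sum_eq_zero_of_finrank_mul_lt_card (p := p) S f (by rw [hV]; omega)
    exact ⟨{T}, by simpa using ⟨hTS, hT⟩⟩
  | more k _ ih =>
    have hkp : (k + 2) * p = (k + 1) * p + p := by ring
    have hple : p ≤ (k + 1) * p := Nat.le_mul_of_pos_left p k.succ_pos
    obtain ⟨T, hTS, hT0, hTcard, hTf⟩ :=
      exists_le_card_le_map_sum_eq_zero (p := p) hV S f (by omega)
    obtain ⟨S', rfl⟩ := Multiset.le_iff_exists_add.mp hTS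
    rw [Multiset.card_add] at hS
    obtain ⟨L, hLcard, hLS, hL⟩ := ih S' (by omega)
    exact ⟨T ::ₘ L, by simp [hLcard], by simpa using hLS, by simpa using ⟨⟨hT0, hTf⟩, hL⟩⟩

theorem exists_zeroSum_partition (hV : Module.finrank (ZMod p) V = 2) (f : α → V) {k : ℕ}
    (hk : k ≠ 0) (S : Multiset α) (hSf : (S.map f).sum = 0) (hS : k * p ≤ S.card) :
    ∃ L : Multiset (Multiset α), L.card = k ∧ L.sum = S ∧ ∀ T ∈ L, T ≠ 0 ∧ (T.map f).sum = 0 := by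
  have hp := (Fact.out : p.Prime).two_le
  obtain ⟨k, rfl⟩ := Nat.exists_eq_succ_of_ne_zero hk
  rw [Nat.succ_mul] at hS
  obtain ⟨S', hS'S, hS'card⟩ := exists_multiset_le_card_eq (S := S) (n := k * p + p - 1) (by omega)
  obtain ⟨L, hLcard, hLS', hL⟩ := exists_zeroSum_blocks (p := p) hV f k S' hS'card.ge
  have hLS'card := Multiset.card_le_card hLS'
  obtain ⟨R, rfl⟩ := Multiset.le_iff_exists_add.mp (hLS'.trans hS'S)
  have hLf : (L.sum.map f).sum = 0 := by
    rw [← Multiset.coe_mapAddMonoidHom, ← Multiset.coe_sumAddMonoidHom, map_multiset_sum,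
      map_multiset_sum]
    exact Multiset.sum_eq_zero (by simpa using fun T hT => (hL T hT).2)
  refine ⟨R ::ₘ L, by simp [hLcard], by simp [add_comm], ?_⟩
  simp only [Multiset.mem_cons, forall_eq_or_imp]
  refine ⟨⟨Multiset.card_pos.mp ?_, by simpa [hLf] using hSf⟩, hL⟩
  rw [Multiset.card_add] at hS
  omega

end ZeroSum

/-- `ElementaryTower N H m` says that there is a chain `N = H₀ ⊴ H₁ ⊴ ⋯ ⊴ Hᵣ = H` of subgroups of
`G` with `Hᵢ / Hᵢ₋₁ ≅ C_{pᵢ} × C_{pᵢ}` for primes `pᵢ`, where `m = p₁ ⋯ pᵣ`. Both upper bounds are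
proved by climbing such a chain. Each quotient is encoded by a surjection on `Hᵢ` with kernel
`Hᵢ₋₁`. -/
inductive ElementaryTower {G : Type*} [Group G] (N : Subgroup G) : Subgroup G → ℕ → Prop
  | refl : ElementaryTower N N 1
  | step {M H : Subgroup G} {q p : ℕ} (hp : p.Prime) (π : H →* Multiplicative (ZMod p × ZMod p))
      (hπ : Function.Surjective π) (hM : π.ker.map H.subtype = M) (tower : ElementaryTower N M q) :
      ElementaryTower N H (q * p)

theorem ElementaryTower.ne_zero {G : Type*} [Group G] {N H : Subgroup G} {m : ℕ}
    (h : ElementaryTower N H m) : m ≠ 0 := by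
  induction h with
  | refl => exact one_ne_zero
  | step hp _ _ _ _ ih => exact mul_ne_zero ih hp.ne_zero

theorem ElementaryTower.card_eq {G : Type*} [Group G] {N H : Subgroup G} {m : ℕ}
    (h : ElementaryTower N H m) : Nat.card H = m ^ 2 * Nat.card N := by
  induction h with
  | refl => simp
  | @step M H q p _ π hπ hM _ ih =>
    have hker : Nat.card π.ker = Nat.card M :=
      hM ▸ (Subgroup.card_map_of_injective H.subtype_injective).symm
    have hquot : Nat.card (H ⧸ π.ker) = p * p := by
      rw [Nat.card_congr (QuotientGroup.quotientKerEquivOfSurjective π hπ).toEquiv,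
        Nat.card_congr Multiplicative.toAdd, Nat.card_prod, Nat.card_zmod]
    rw [Subgroup.card_eq_card_quotient_mul_card_subgroup π.ker, hquot, hker, ih]
    ring

section SmallDavenport

variable {G : Type*} [Group G]

/-- `IsOrderedProduct S g` says that the terms of the sequence `S` can be ordered so that their
product equals `g`; thus `IsProductOne S` is `IsOrderedProduct S 1`. -/
def IsOrderedProduct (S : Multiset G) (g : G) : Prop :=
  ∃ l : List G, (l : Multiset G) = S ∧ l.prod = g

theorem isOrderedProduct_list_sum {H : Subgroup G} {l : List (Multiset G)} {x : Multiset G → H}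
    (hl : ∀ S ∈ l, IsOrderedProduct S (x S)) :
    IsOrderedProduct l.sum ((l.map x).prod : H) := by
  induction l with
  | nil => exact ⟨[], by simp⟩
  | cons S l ih =>
    obtain ⟨s, rfl, hs⟩ := hl S List.mem_cons_self
    obtain ⟨t, ht, ht'⟩ := ih fun T hT => hl T (List.mem_cons_of_mem _ hT)
    exact ⟨s ++ t, by simp [← ht], by simp [hs, ht']⟩

theorem exists_infix_prod_eq_one {Γ α : Type*} [Group Γ] [Finite Γ] (l : List α) (x : α → Γ)
    (hl : Nat.card Γ ≤ l.length) : ∃ s, s <:+: l ∧ s ≠ [] ∧ (s.map x).prod = 1 := by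
  have := Fintype.ofFinite Γ
  obtain ⟨i, j, hij, hprod⟩ : ∃ i j : Fin (l.length + 1), i < j ∧
      ((l.take i).map x).prod = ((l.take j).map x).prod := by
    obtain ⟨i, j, hne, hprod⟩ := Fintype.exists_ne_map_eq_of_card_lt
      (fun i : Fin (l.length + 1) => ((l.take i).map x).prod)
      (by rw [Fintype.card_fin, ← Nat.card_eq_fintype_card]; omega)
    exact hne.lt_or_gt.elim (⟨i, j, ·, hprod⟩) (⟨j, i, ·, hprod.symm⟩)
  have hsplit : l.take i ++ (l.take j).drop i = l.take j := by
    simpa [List.take_take, hij.le] using List.take_append_drop i (l.take j)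
  refine ⟨(l.take j).drop i, (List.drop_suffix ..).isInfix.trans (List.take_prefix ..).isInfix,
    List.ne_nil_of_length_pos ?_, ?_⟩
  · simp only [List.length_drop, List.length_take]
    omega
  · rw [← hsplit, List.map_append, List.prod_append] at hprod
    exact left_eq_mul.mp hprod

theorem exists_blocks_map_ker {H : Subgroup G} {p : ℕ} [Fact p.Prime]
    (π : H →* Multiplicative (ZMod p × ZMod p)) {k : ℕ} {B : Multiset (Multiset G)}
    (hB : ∀ S ∈ B, S ≠ 0 ∧ ∃ h : H, IsOrderedProduct S h) (hcard : k * p + p - 1 ≤ B.card) :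
    ∃ B' : Multiset (Multiset G), B'.card = k ∧ B'.sum ≤ B.sum ∧
      ∀ S ∈ B', S ≠ 0 ∧ ∃ h : π.ker.map H.subtype, IsOrderedProduct S h := by
  choose! hB0 x hx using hB
  obtain ⟨L, hLcard, hLB, hL⟩ := exists_zeroSum_blocks (p := p)
    (V := ZMod p × ZMod p) (by simp) (fun S => (π (x S)).toAdd) k B hcard
  refine ⟨L.map Multiset.sum, by simpa using hLcard, ?_, ?_⟩
  · obtain ⟨R, rfl⟩ := Multiset.le_iff_exists_add.mp hLB
    rw [Multiset.sum_add, ← Multiset.sum_join, Multiset.join]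
    exact Multiset.le_add_right _ _
  simp only [Multiset.mem_map, forall_exists_index, and_imp, forall_apply_eq_imp_iff₂]
  intro T hT
  have hTB : ∀ S ∈ T, S ∈ B := fun S hS =>
    Multiset.mem_of_le ((Multiset.le_sum_of_mem hT).trans hLB) hS
  obtain ⟨hT0, hTsum⟩ := hL T hT
  obtain ⟨S, hS⟩ := Multiset.exists_mem_of_ne_zero hT0
  refine ⟨fun h => hB0 S (hTB S hS) (Multiset.sum_eq_zero_iff.mp h S hS), ?_⟩
  have hker : (T.toList.map x).prod ∈ π.ker := by
    rw [MonoidHom.mem_ker, map_list_prod, ← toAdd_eq_zero, toAdd_list_sum]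
    rw [← hTsum, ← Multiset.sum_map_toList]
    simp [Function.comp_def]
  have hordered := isOrderedProduct_list_sum (l := T.toList) (x := x)
    fun S hS => hx S (hTB S (Multiset.mem_toList.mp hS))
  rw [Multiset.sum_toList] at hordered
  exact ⟨⟨_, Subgroup.mem_map_of_mem _ hker⟩, hordered⟩

theorem ElementaryTower.exists_blocks {N H : Subgroup G} {m : ℕ} (h : ElementaryTower N H m)
    {k : ℕ} {B : Multiset (Multiset G)}
    (hB : ∀ S ∈ B, S ≠ 0 ∧ ∃ h : H, IsOrderedProduct S h) (hcard : k * m + m - 1 ≤ B.card) :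
    ∃ B' : Multiset (Multiset G), B'.card = k ∧ B'.sum ≤ B.sum ∧
      ∀ S ∈ B', S ≠ 0 ∧ ∃ h : N, IsOrderedProduct S h := by
  induction h generalizing B with
  | refl =>
    obtain ⟨B', hB'B, hB'card⟩ := exists_multiset_le_card_eq (S := B) (n := k) (by omega)
    obtain ⟨R, rfl⟩ := Multiset.le_iff_exists_add.mp hB'B
    exact ⟨B', hB'card, by simp, fun S hS => hB S (Multiset.mem_of_le hB'B hS)⟩
  | @step M H q p hp π _ hM tower ih =>
    have := Fact.mk hp
    have hq := Nat.pos_of_ne_zero tower.ne_zero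
    have hcard' : (k * q + q - 1) * p + p - 1 ≤ B.card := calc
      (k * q + q - 1) * p + p - 1 = (k * q + q - 1 + 1) * p - 1 := by rw [Nat.succ_mul]
      _ = k * (q * p) + q * p - 1 := by rw [Nat.sub_add_cancel (by omega)]; ring_nf
      _ ≤ B.card := hcard
    obtain ⟨B', hB'card, hB'B, hB'⟩ := exists_blocks_map_ker π hB hcard'
    subst hM
    obtain ⟨B'', hB''card, hB''B', hB''⟩ := ih hB' hB'card.ge
    exact ⟨B'', hB''card, hB''B'.trans hB'B, hB''⟩

theorem ElementaryTower.not_productOneFree {N : Subgroup G} [Finite N] {m : ℕ}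
    (h : ElementaryTower N ⊤ m) {S : Multiset G} (hS : Nat.card N * m + m - 1 ≤ S.card) :
    ¬ProductOneFree S := by
  intro hfree
  obtain ⟨B, hBcard, hBS, hB⟩ := h.exists_blocks (B := S.map ({·})) (k := Nat.card N) (by
      simp only [Multiset.mem_map, forall_exists_index, and_imp, forall_apply_eq_imp_iff₂]
      exact fun g _ => ⟨Multiset.singleton_ne_zero g, ⟨g, trivial⟩, [g], by simp⟩)
    (by simpa using hS)
  rw [Multiset.sum_map_singleton] at hBS
  choose! hB0 x hx using hB
  obtain ⟨l, hlB, hl0, hlprod⟩ := exists_infix_prod_eq_one B.toList x (by simp [hBcard])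
  have hlB' : ∀ T ∈ l, T ∈ B := fun T hT => Multiset.mem_toList.mp (hlB.subset hT)
  have hone : IsProductOne l.sum := by
    have := isOrderedProduct_list_sum (x := x) fun T hT => hx T (hlB' T hT)
    rwa [hlprod] at this
  refine hfree l.sum (le_trans ?_ hBS) ?_ hone
  · rw [← Multiset.sum_toList B]
    exact hlB.sublist.sum_le_sum fun _ _ => zero_le
  · obtain ⟨T, hT⟩ := List.exists_mem_of_ne_nil l hl0
    exact fun h => hB0 T (hlB' T hT) (List.sum_eq_zero_iff.mp h T hT)

theorem productOneFree_replicate_add_replicate {Γ : Type*} [CommGroup Γ] (ψ : G →* Γ) {a : G}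
    (ha : ψ a = 1) (b : G) : ProductOneFree
      (Multiset.replicate (orderOf a - 1) a + Multiset.replicate (orderOf (ψ b) - 1) b) := by
  classical
  rintro T hT hT0 ⟨l, rfl, hl⟩
  obtain ⟨i, hi, j, hj, hij⟩ : ∃ i ≤ orderOf a - 1, ∃ j ≤ orderOf (ψ b) - 1,
      (l : Multiset G) = Multiset.replicate i a + Multiset.replicate j b := by
    obtain ⟨i, hi, hi'⟩ := Multiset.le_replicate_iff.mp
      (Multiset.inter_le_right (s := (l : Multiset G)) (t := Multiset.replicate (orderOf a - 1) a))
    obtain ⟨j, hj, hj'⟩ := Multiset.le_replicate_iff.mp (tsub_le_iff_left.mpr hT)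
    exact ⟨i, hi, j, hj, by rw [← hi', ← hj', add_comm, Multiset.sub_add_inter]⟩
  have hψ : ψ b ^ j = 1 := by
    have hψl : (Multiset.map ψ l).prod = 1 := by
      rw [Multiset.map_coe, Multiset.prod_coe, ← map_list_prod, hl, map_one]
    simpa [hij, ha] using hψl
  obtain rfl : j = 0 := by
    by_contra hj0
    have := Nat.le_of_dvd (Nat.pos_of_ne_zero hj0) (orderOf_dvd_of_pow_eq_one hψ)
    omega
  obtain rfl : l = List.replicate i a := by
    rw [← List.perm_replicate, ← Multiset.coe_eq_coe, hij, Multiset.coe_replicate]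
    simp
  rw [List.prod_replicate] at hl
  have hi0 : i ≠ 0 := by
    rintro rfl
    simp at hT0
  have := Nat.le_of_dvd (Nat.pos_of_ne_zero hi0) (orderOf_dvd_of_pow_eq_one hl)
  omega

end SmallDavenport

section PowSubgroup

/-- The elements of `A ⋊[φ] B` whose components are a `c`-th power in `A` and an `e`-th power
in `B`. In a semidirect product of cyclic groups they form the links of an `ElementaryTower`. -/
def powSubgroup {A B : Type*} [CommGroup A] [CommGroup B] (φ : B →* MulAut A) (c e : ℕ) :
    Subgroup (A ⋊[φ] B) where
  carrier := {g | (∃ x, x ^ c = g.left) ∧ ∃ y, y ^ e = g.right}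
  one_mem' := ⟨⟨1, by simp⟩, 1, by simp⟩
  mul_mem' := by
    rintro g h ⟨⟨x, hx⟩, y, hy⟩ ⟨⟨x', hx'⟩, y', hy'⟩
    exact ⟨⟨x * φ g.right x', by simp [mul_pow, hx, ← map_pow, hx']⟩, y * y', by simp [mul_pow, *]⟩
  inv_mem' := by
    rintro g ⟨⟨x, hx⟩, y, hy⟩
    exact ⟨⟨φ g.right⁻¹ x⁻¹, by simp [← map_pow, hx]⟩, y⁻¹, by simp [hy]⟩

theorem mem_powSubgroup {A B : Type*} [CommGroup A] [CommGroup B] {φ : B →* MulAut A} {c e : ℕ}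
    {g : A ⋊[φ] B} : g ∈ powSubgroup φ c e ↔ (∃ x, x ^ c = g.left) ∧ ∃ y, y ^ e = g.right :=
  Iff.rfl

theorem powSubgroup_one_one {A B : Type*} [CommGroup A] [CommGroup B] (φ : B →* MulAut A) :
    powSubgroup φ 1 1 = ⊤ :=
  eq_top_iff.mpr fun g _ => ⟨⟨g.left, pow_one _⟩, g.right, pow_one _⟩

theorem powSubgroup_card_card {A B : Type*} [CommGroup A] [CommGroup B] (φ : B →* MulAut A) :
    powSubgroup φ (Nat.card A) (Nat.card B) = ⊥ := by
  rw [eq_bot_iff]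
  rintro g ⟨⟨x, hx⟩, y, hy⟩
  rw [pow_card_eq_one'] at hx hy
  exact SemidirectProduct.ext hx.symm hy.symm

/-- Reduction modulo a divisor `p` of `N`, as a homomorphism of multiplicatively written groups. -/
def zmodReduction {p N : ℕ} (h : p ∣ N) : Multiplicative (ZMod N) →* Multiplicative (ZMod p) :=
  AddMonoidHom.toMultiplicative (ZMod.castHom h (ZMod p)).toAddMonoidHom

theorem zmodReduction_surjective {p N : ℕ} (h : p ∣ N) : Function.Surjective (zmodReduction h) :=
  ZMod.castHom_surjective h

theorem zmodReduction_ofAdd_intCast {p N : ℕ} (h : p ∣ N) (k : ℤ) :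
    zmodReduction h (.ofAdd (k : ZMod N)) = .ofAdd (k : ZMod p) :=
  congrArg Multiplicative.ofAdd (map_intCast (ZMod.castHom h (ZMod p)) k)

theorem zmodReduction_eq_one_iff {p N : ℕ} (h : p ∣ N) {x : Multiplicative (ZMod N)} :
    zmodReduction h x = 1 ↔ ∃ y, y ^ p = x := by
  refine ⟨fun hx => ?_, ?_⟩
  · obtain ⟨k, rfl⟩ : ∃ k : ℤ, .ofAdd (k : ZMod N) = x := ZMod.intCast_surjective x.toAdd
    rw [zmodReduction_ofAdd_intCast, ofAdd_eq_one, ZMod.intCast_zmod_eq_zero_iff_dvd] at hx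
    obtain ⟨j, rfl⟩ := hx
    exact ⟨.ofAdd (j : ZMod N), by simp [← ofAdd_nsmul]⟩
  · rintro ⟨y, rfl⟩
    rw [map_pow, ← toAdd_eq_zero, toAdd_pow, nsmul_eq_mul, CharP.cast_eq_zero, zero_mul]

theorem zmodReduction_eq_one_of_pow_eq_one {c p N : ℕ} (h : p ∣ N) (hc : c * p ∣ N) (hc0 : c ≠ 0)
    {x : Multiplicative (ZMod N)} (hx : x ^ c = 1) : zmodReduction h x = 1 := by
  obtain ⟨k, rfl⟩ : ∃ k : ℤ, .ofAdd (k : ZMod N) = x := ZMod.intCast_surjective x.toAdd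
  rw [← ofAdd_nsmul, nsmul_eq_mul, ofAdd_eq_one] at hx
  have hck : (c * p : ℤ) ∣ c * k := by
    refine dvd_trans (by exact_mod_cast hc) ((ZMod.intCast_zmod_eq_zero_iff_dvd _ N).mp ?_)
    exact_mod_cast hx
  rw [zmodReduction_ofAdd_intCast, ofAdd_eq_one, ZMod.intCast_zmod_eq_zero_iff_dvd]
  exact Int.dvd_of_mul_dvd_mul_left (by exact_mod_cast hc0) hck

theorem exists_zmodReduction_mulAut_pow_apply {p N : ℕ} (h : p ∣ N)
    (a : MulAut (Multiplicative (ZMod N))) : ∃ v : ZMod p, ∀ (k : ℕ) x,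
      (zmodReduction h ((a ^ k) x)).toAdd = v ^ k * (zmodReduction h x).toAdd := by
  refine ⟨(zmodReduction h (a (.ofAdd 1))).toAdd, fun k => ?_⟩
  have ha (x) : (zmodReduction h (a x)).toAdd =
      (zmodReduction h (a (.ofAdd 1))).toAdd * (zmodReduction h x).toAdd := by
    obtain ⟨k, rfl⟩ : ∃ k : ℤ, .ofAdd (k : ZMod N) = x := ZMod.intCast_surjective x.toAdd
    have hk : Multiplicative.ofAdd (k : ZMod N) = .ofAdd 1 ^ k := by simp [← ofAdd_zsmul]
    rw [zmodReduction_ofAdd_intCast, hk, map_zpow, map_zpow, toAdd_zpow, zsmul_eq_mul, mul_comm]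
    rfl
  induction k with
  | zero => simp
  | succ k ih =>
    intro x
    rw [pow_succ', MulAut.mul_apply, ha, ih, pow_succ', mul_assoc]

theorem eq_one_of_pow_eq_one_of_minFac_eq {p q : ℕ} [Fact p.Prime] (hp : q.minFac = p)
    (hq : q ≠ 0) {u : ZMod p} (hu : u ^ q = 1) : u = 1 := by
  have hp2 := (Fact.out : p.Prime).two_le
  have hu0 : u ≠ 0 := by
    rintro rfl
    simp [hq] at hu
  have hle : orderOf u ≤ p - 1 :=
    Nat.le_of_dvd (by omega) (orderOf_dvd_of_pow_eq_one (ZMod.pow_card_sub_one_eq_one hu0))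
  have hpos : 0 < orderOf u := orderOf_pos_iff.mpr (isOfFinOrder_iff_pow_eq_one.mpr
    ⟨q, Nat.pos_of_ne_zero hq, hu⟩)
  by_contra hne
  have := Nat.minFac_le_of_dvd (m := orderOf u)
    (by have := orderOf_eq_one_iff.not.mpr hne; omega) (orderOf_dvd_of_pow_eq_one hu)
  omega

theorem zmodReduction_mulAut_pow_apply {p q e N : ℕ} [Fact p.Prime] (h : p ∣ N) (hp : q.minFac = p)
    (hq : q ≠ 0) {a : MulAut (Multiplicative (ZMod N))} (ha : a ^ (e * q) = 1)
    (x : Multiplicative (ZMod N)) :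
    zmodReduction h ((a ^ e) x) = zmodReduction h x := by
  obtain ⟨v, hv⟩ := exists_zmodReduction_mulAut_pow_apply h a
  have hve : (v ^ e) ^ q = 1 := by
    have := hv (e * q) (.ofAdd ((1 : ℤ) : ZMod N))
    rw [ha, MulAut.one_apply, zmodReduction_ofAdd_intCast] at this
    simpa [pow_mul] using this.symm
  apply Multiplicative.toAdd.injective
  rw [hv, eq_one_of_pow_eq_one_of_minFac_eq hp hq hve, one_mul]

/-- The homomorphism `x ^ c ↦ x mod p` on the `c`-th powers in a cyclic group of order `N`. -/
noncomputable def powRangeReduction {c p N : ℕ} (hc : c * p ∣ N) (hc0 : c ≠ 0) :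
    (powMonoidHom c : Multiplicative (ZMod N) →* _).range →* Multiplicative (ZMod p) :=
  (powMonoidHom c : Multiplicative (ZMod N) →* _).rangeRestrict.liftOfSurjective
    (MonoidHom.rangeRestrict_surjective _)
    ⟨zmodReduction (dvd_of_mul_left_dvd hc), fun _ hx =>
      zmodReduction_eq_one_of_pow_eq_one _ hc hc0 (congrArg Subtype.val hx)⟩

theorem powRangeReduction_apply {c p N : ℕ} (hc : c * p ∣ N) (hc0 : c ≠ 0)
    (x : Multiplicative (ZMod N)) (hx : x ^ c ∈ (powMonoidHom c).range) :
    powRangeReduction hc hc0 ⟨x ^ c, hx⟩ = zmodReduction (dvd_of_mul_left_dvd hc) x :=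
  MonoidHom.liftOfRightInverse_comp_apply _ _ _ _ x

theorem powRangeReduction_eq_one_iff {c p N : ℕ} (hc : c * p ∣ N) (hc0 : c ≠ 0)
    (x : (powMonoidHom c : Multiplicative (ZMod N) →* _).range) :
    powRangeReduction hc hc0 x = 1 ↔ ∃ y, y ^ (c * p) = x.1 := by
  have hp := dvd_of_mul_left_dvd hc
  obtain ⟨_, x, rfl⟩ := x
  refine (Eq.congr_left (powRangeReduction_apply hc hc0 x _)).trans ⟨fun hx => ?_, ?_⟩
  · obtain ⟨y, rfl⟩ := (zmodReduction_eq_one_iff hp).mp hx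
    exact ⟨y, by rw [mul_comm, pow_mul]; rfl⟩
  · rintro ⟨y, hy⟩
    have hxy : (x / y ^ p) ^ c = 1 := by
      rw [div_pow, ← pow_mul, mul_comm p, hy]
      exact div_self' _
    rw [← div_mul_cancel x (y ^ p), map_mul, zmodReduction_eq_one_of_pow_eq_one hp hc hc0 hxy,
      one_mul]
    exact (zmodReduction_eq_one_iff hp).mpr ⟨y, rfl⟩

theorem powRangeReduction_surjective {c p N : ℕ} (hc : c * p ∣ N) (hc0 : c ≠ 0) :
    Function.Surjective (powRangeReduction hc hc0) := fun z => by
  obtain ⟨x, rfl⟩ := zmodReduction_surjective (dvd_of_mul_left_dvd hc) z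
  exact ⟨⟨x ^ c, x, rfl⟩, powRangeReduction_apply hc hc0 x _⟩

theorem powRangeReduction_mulAut_apply {m N c e p q : ℕ} [Fact p.Prime]
    (φ : Multiplicative (ZMod m) →* MulAut (Multiplicative (ZMod N))) (hc : c * p ∣ N) (hc0 : c ≠ 0)
    (he : e * q = m) (hp : q.minFac = p) (hq : q ≠ 0) {y : Multiplicative (ZMod m)}
    (hy : ∃ z, z ^ e = y) (x : (powMonoidHom c : Multiplicative (ZMod N) →* _).range)
    (hx : φ y x ∈ (powMonoidHom c).range) :
    powRangeReduction hc hc0 ⟨φ y x, hx⟩ = powRangeReduction hc hc0 x := by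
  obtain ⟨z, rfl⟩ := hy
  obtain ⟨_, x, rfl⟩ := x
  have hzm : z ^ m = 1 := by
    rw [← toAdd_eq_zero, toAdd_pow, nsmul_eq_mul, CharP.cast_eq_zero, zero_mul]
  have hz : φ z ^ (e * q) = 1 := by rw [← map_pow, he, hzm, map_one]
  have hred := zmodReduction_mulAut_pow_apply (dvd_of_mul_left_dvd hc) hp hq hz x
  rw [← map_pow] at hred
  calc
    powRangeReduction hc hc0 ⟨φ (z ^ e) (x ^ c), hx⟩
        = powRangeReduction hc hc0 ⟨φ (z ^ e) x ^ c, _, rfl⟩ := by simp only [map_pow]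
    _ = zmodReduction (dvd_of_mul_left_dvd hc) (φ (z ^ e) x) := powRangeReduction_apply ..
    _ = zmodReduction (dvd_of_mul_left_dvd hc) x := hred
    _ = powRangeReduction hc hc0 ⟨x ^ c, _, rfl⟩ := (powRangeReduction_apply ..).symm

theorem exists_powSubgroup_surjective_ker_eq {m N c e p q : ℕ} [Fact p.Prime]
    (φ : Multiplicative (ZMod m) →* MulAut (Multiplicative (ZMod N))) (hc : c * p ∣ N) (hc0 : c ≠ 0)
    (he : e * q = m) (he0 : e ≠ 0) (hp : q.minFac = p) (hq : q ≠ 0) :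
    ∃ π : powSubgroup φ c e →* Multiplicative (ZMod p × ZMod p), Function.Surjective π ∧
      π.ker.map (powSubgroup φ c e).subtype = powSubgroup φ (c * p) (e * p) := by
  have hep : e * p ∣ m := he ▸ mul_dvd_mul_left e (hp ▸ q.minFac_dvd)
  let l (g : powSubgroup φ c e) := powRangeReduction hc hc0 ⟨g.1.left, g.2.1⟩
  let r (g : powSubgroup φ c e) := powRangeReduction hep he0 ⟨g.1.right, g.2.2⟩
  have hl (g h) : l (g * h) = l g * l h := by
    obtain ⟨x, hx⟩ := h.2.1
    have hφ : φ g.1.right h.1.left ∈ (powMonoidHom c).range :=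
      ⟨φ g.1.right x, by rw [← hx, map_pow]; rfl⟩
    calc
      l (g * h) = powRangeReduction hc hc0 (⟨g.1.left, g.2.1⟩ * ⟨φ g.1.right h.1.left, hφ⟩) := rfl
      _ = l g * l h := by
        rw [map_mul, powRangeReduction_mulAut_apply φ hc hc0 he hp hq g.2.2 ⟨h.1.left, h.2.1⟩ hφ]
  have hr (g h) : r (g * h) = r g * r h :=
    map_mul (powRangeReduction hep he0) ⟨g.1.right, g.2.2⟩ ⟨h.1.right, h.2.2⟩
  refine ⟨MonoidHom.mk' (fun g => .ofAdd ((l g).toAdd, (r g).toAdd)) fun g h => by rw [hl, hr]; rfl,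
    fun z => ?_, Subgroup.ext fun g => ?_⟩
  · obtain ⟨x, hx⟩ := powRangeReduction_surjective hc hc0 (.ofAdd z.toAdd.1)
    obtain ⟨y, hy⟩ := powRangeReduction_surjective hep he0 (.ofAdd z.toAdd.2)
    exact ⟨⟨⟨x, y⟩, x.2, y.2⟩, congrArg Multiplicative.ofAdd (Prod.ext hx hy)⟩
  · have hker (g : powSubgroup φ c e) : (l g = 1 ∧ r g = 1) ↔
        g.1 ∈ powSubgroup φ (c * p) (e * p) := by
      rw [mem_powSubgroup, powRangeReduction_eq_one_iff, powRangeReduction_eq_one_iff]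
    have hle : powSubgroup φ (c * p) (e * p) ≤ powSubgroup φ c e := by
      rintro g ⟨⟨x, hx⟩, y, hy⟩
      exact ⟨⟨x ^ p, by rw [← hx, ← pow_mul, mul_comm]⟩, y ^ p, by rw [← hy, ← pow_mul, mul_comm]⟩
    constructor
    · rintro ⟨g, hg, rfl⟩
      exact (hker g).mp (Prod.ext_iff.mp (Multiplicative.ofAdd.injective hg))
    · intro hg
      exact ⟨⟨g, hle hg⟩,
        congrArg Multiplicative.ofAdd (Prod.ext_iff.mpr ((hker ⟨g, hle hg⟩).mpr hg)), rfl⟩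

theorem elementaryTower_powSubgroup {m N : ℕ}
    (φ : Multiplicative (ZMod m) →* MulAut (Multiplicative (ZMod N))) (q : ℕ) {c e : ℕ}
    (hc : c * q ∣ N) (hc0 : c ≠ 0) (he : e * q = m) (hm : m ≠ 0) :
    ElementaryTower (powSubgroup φ (c * q) (e * q)) (powSubgroup φ c e) q := by
  induction q using Nat.strong_induction_on generalizing c e with
  | _ q ih =>
    obtain rfl | hq1 := eq_or_ne q 1
    · simpa using ElementaryTower.refl
    have hp := Nat.minFac_prime hq1
    have := Fact.mk hp
    have he0 : e ≠ 0 := left_ne_zero_of_mul (he ▸ hm)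
    have hq0 : q ≠ 0 := right_ne_zero_of_mul (he ▸ hm)
    obtain ⟨π, hπ, hker⟩ := exists_powSubgroup_surjective_ker_eq φ
      ((mul_dvd_mul_left c q.minFac_dvd).trans hc) hc0 he he0 rfl hq0
    have hq' : q.minFac * (q / q.minFac) = q := Nat.mul_div_cancel' q.minFac_dvd
    have tower := ih (q / q.minFac) (Nat.div_lt_self (Nat.pos_of_ne_zero hq0) hp.one_lt)
      (by rwa [mul_assoc, hq']) (mul_ne_zero hc0 hp.ne_zero) (by rwa [mul_assoc, hq'])
    rw [mul_assoc, mul_assoc, hq'] at tower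
    have step := ElementaryTower.step hp π hπ hker tower
    rwa [Nat.div_mul_cancel q.minFac_dvd] at step

end PowSubgroup

section Transfer

variable {K A G : Type*} [Field K] [CommRing A] [Algebra K A] [Group G]

/-- The subspace `I ^ H` of the elements of the ideal `I` that are fixed by the subgroup `H`. -/
def invariantsIn (σ : G →* (A →ₐ[K] A)) (I : Ideal A) (H : Subgroup G) : Submodule K A where
  carrier := {f | f ∈ I ∧ ∀ h ∈ H, σ h f = f}
  add_mem' := fun ⟨ha, ha'⟩ ⟨hb, hb'⟩ =>
    ⟨I.add_mem ha hb, fun h hh => by rw [map_add, ha' h hh, hb' h hh]⟩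
  zero_mem' := ⟨I.zero_mem, fun h _ => map_zero (σ h)⟩
  smul_mem' := fun c _ ⟨ha, ha'⟩ =>
    ⟨I.smul_of_tower_mem c ha, fun h hh => by rw [map_smul, ha' h hh]⟩

theorem mem_invariantsIn {σ : G →* (A →ₐ[K] A)} {I : Ideal A} {H : Subgroup G} {f : A} :
    f ∈ invariantsIn σ I H ↔ f ∈ I ∧ ∀ h ∈ H, σ h f = f :=
  Iff.rfl

theorem mem_invariantsIn_top {σ : G →* (A →ₐ[K] A)} {I : Ideal A} {f : A} :
    f ∈ invariantsIn σ I ⊤ ↔ f ∈ I ∧ ∀ g, σ g f = f := by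
  simp [mem_invariantsIn]

theorem invariantsIn_comp {Γ : Type*} [Group Γ] (σ : G →* (A →ₐ[K] A)) (I : Ideal A)
    (ψ : Γ →* G) (L : Subgroup Γ) :
    invariantsIn (σ.comp ψ) I L = invariantsIn σ I (L.map ψ) := by
  ext f
  simp [mem_invariantsIn]

variable [Fintype G] (σ : G →* (A →ₐ[K] A))

/-- The transfer `f ↦ ∑ g, g • f`, which projects onto the invariants up to the factor `|G|`. -/
def transfer : A →ₗ[K] A :=
  ∑ g, (σ g).toLinearMap

theorem transfer_apply (f : A) : transfer σ f = ∑ g, σ g f := by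
  simp [transfer, LinearMap.sum_apply]

theorem map_transfer (g : G) (f : A) : σ g (transfer σ f) = transfer σ f := by
  rw [transfer_apply, map_sum]
  exact Fintype.sum_equiv (Equiv.mulLeft g) _ _ fun x => by simp [AlgHom.mul_apply]

theorem transfer_mem_invariantsIn {I : Ideal A} (hI : ∀ g, ∀ f ∈ I, σ g f ∈ I) {f : A}
    (hf : f ∈ I) : transfer σ f ∈ invariantsIn σ I ⊤ :=
  ⟨transfer_apply σ f ▸ I.sum_mem fun g _ => hI g f hf, fun g _ => map_transfer σ g f⟩

variable {σ}

theorem transfer_mul_of_forall_map_eq {u : A} (hu : ∀ g, σ g u = u) (f : A) :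
    transfer σ (u * f) = u * transfer σ f := by
  simp only [transfer_apply, map_mul, hu, Finset.mul_sum]

theorem transfer_of_forall_map_eq {f : A} (hf : ∀ g, σ g f = f) :
    transfer σ f = (Nat.card G : K) • f := by
  simp only [transfer_apply, hf]
  simp [Nat.cast_smul_eq_nsmul, Nat.card_eq_fintype_card]

theorem mem_of_transfer_mem (hG : (Nat.card G : K) ≠ 0) {f : A} (hf : ∀ g, σ g f = f)
    {W : Submodule K A} (h : transfer σ f ∈ W) : f ∈ W := by
  rwa [transfer_of_forall_map_eq hf, W.smul_mem_iff hG] at h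

end Transfer

section PowersOfSubspaces

variable {K A : Type*} [CommSemiring K] [CommSemiring A] [Algebra K A]

theorem span_pow_card_le {ι : Type*} [Fintype ι] {s : Set A} {W : Submodule K A}
    (h : ∀ w : ι → A, (∀ i, w i ∈ s) → ∏ i, w i ∈ W) :
    Submodule.span K s ^ Fintype.card ι ≤ W := by
  rw [Submodule.span_pow, Submodule.span_le]
  intro x hx
  obtain ⟨w, rfl⟩ := Set.mem_pow.mp hx
  have hw := h (fun i => w (Fintype.equivFin ι i)) fun i => (w _).2
  rwa [Equiv.prod_comp (Fintype.equivFin ι) fun i => (w i : A), ← List.prod_ofFn] at hw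

theorem multiset_prod_mem_pow_card (M : Submodule K A) (S : Multiset A) (hS : ∀ x ∈ S, x ∈ M) :
    S.prod ∈ M ^ S.card := by
  induction S using Multiset.induction with
  | empty => rw [Multiset.prod_zero, Multiset.card_zero, pow_zero]; exact Submodule.one_le.mp le_rfl
  | cons x S ih =>
    rw [Multiset.prod_cons, Multiset.card_cons, pow_succ']
    exact Submodule.mul_mem_mul (hS x (S.mem_cons_self x))
      (ih fun y hy => hS y (Multiset.mem_cons_of_mem hy))

end PowersOfSubspaces

section SubgroupOfFiniteIndex

variable {K A G : Type*} [Field K] [CommRing A] [Algebra K A] [Group G]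
  {σ : G →* (A →ₐ[K] A)} {I : Ideal A} {H : Subgroup G}

/- For each `g` the factor of `∏ c, (g • w c - c • w c)` at the coset `c = gH` vanishes. Multiply by
`g • a`, expand and sum over `g`. -/
theorem sum_transfer_mul_prod_eq_zero [Fintype G] [Fintype (G ⧸ H)] [DecidableEq (G ⧸ H)] (a : A)
    {w : G ⧸ H → A} (hw : ∀ c, ∀ h ∈ H, σ h (w c) = w c) :
    ∑ S : Finset (G ⧸ H), transfer σ (a * ∏ c ∈ S, w c) * ∏ c ∈ Sᶜ, -σ c.out (w c) = 0 := by
  have hvanish (g : G) : σ g a * ∏ c, (σ g (w c) + -σ c.out (w c)) = 0 := by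
    obtain ⟨h, hh⟩ := QuotientGroup.mk_out_eq_mul H g
    rw [Finset.prod_eq_zero (Finset.mem_univ (g : G ⧸ H)), mul_zero]
    rw [hh, map_mul, AlgHom.mul_apply, hw _ h h.2, add_neg_cancel]
  rw [← Finset.sum_eq_zero fun g (_ : g ∈ Finset.univ) => hvanish g]
  simp only [Fintype.prod_add, transfer_apply, Finset.sum_mul, Finset.mul_sum, map_mul, map_prod,
    mul_assoc]
  exact Finset.sum_comm

theorem transfer_mul_prod_mem_sq [Fintype G] [Fintype (G ⧸ H)] (hG : (Nat.card G : K) ≠ 0)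
    (hI : ∀ g, ∀ f ∈ I, σ g f ∈ I) {a : A} (ha : a ∈ I) {w : G ⧸ H → A}
    (hw : ∀ c, w c ∈ invariantsIn σ I H) :
    transfer σ (a * ∏ c, w c) ∈ invariantsIn σ I ⊤ ^ 2 := by
  classical
  have hsum := congrArg (transfer σ) (sum_transfer_mul_prod_eq_zero a fun c => (hw c).2)
  simp only [map_sum, map_zero, transfer_mul_of_forall_map_eq fun g => map_transfer σ g _] at hsum
  rw [Fintype.sum_eq_add_sum_compl Finset.univ, Finset.compl_univ, Finset.prod_empty,
    transfer_of_forall_map_eq fun g => map_one (σ g), mul_smul_comm, mul_one] at hsum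
  rw [← Submodule.smul_mem_iff _ hG, eq_neg_of_add_eq_zero_left hsum, sq]
  refine neg_mem (sum_mem fun S hS => Submodule.mul_mem_mul ?_ ?_)
  · exact transfer_mem_invariantsIn σ hI (I.mul_mem_right _ ha)
  · obtain ⟨c, hc⟩ : Sᶜ.Nonempty := by
      simpa [Finset.nonempty_iff_ne_empty] using hS
    exact transfer_mem_invariantsIn σ hI <|
      I.mem_of_dvd (Finset.dvd_prod_of_mem _ hc) (I.neg_mem (hI _ _ (hw c).1))

theorem mem_invariantsIn_top_sq [Finite G] (hG : (Nat.card G : K) ≠ 0)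
    (hI : ∀ g, ∀ f ∈ I, σ g f ∈ I) {f : A} (hfG : ∀ g, σ g f = f)
    (hf : f ∈ invariantsIn σ I H ^ (H.index + 1)) : f ∈ invariantsIn σ I ⊤ ^ 2 := by
  have := Fintype.ofFinite G
  have := Fintype.ofFinite (G ⧸ H)
  have hcard : H.index + 1 = Fintype.card (Option (G ⧸ H)) := by
    rw [Fintype.card_option, ← Nat.card_eq_fintype_card, Subgroup.index]
  rw [hcard, ← (invariantsIn σ I H).span_eq] at hf
  refine mem_of_transfer_mem hG hfG (Submodule.mem_comap.mp (span_pow_card_le ?_ hf))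
  intro w hw
  rw [Submodule.mem_comap, Fintype.prod_option]
  exact transfer_mul_prod_mem_sq hG hI (hw none).1 fun c => hw (some c)

end SubgroupOfFiniteIndex

section WeightVectors

variable {K : Type*} [Field K] {Q : Type*} [CommGroup Q]

theorem sum_monoidHom_units_apply_eq_zero [Finite Q] [HasEnoughRootsOfUnity K (Monoid.exponent Q)]
    [Fintype (Q →* Kˣ)] {x : Q} (hx : x ≠ 1) : ∑ χ : Q →* Kˣ, (χ x : K) = 0 := by
  obtain ⟨χ, hχ⟩ := CommGroup.exists_apply_ne_one_of_hasEnoughRootsOfUnity Q K hx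
  refine sum_hom_units_eq_zero ((Units.coeHom K).comp (MonoidHom.eval x)) fun h => hχ ?_
  simpa using DFunLike.congr_fun h χ

variable {A Γ : Type*} [CommRing A] [Algebra K A] [Group Γ] (σ : Γ →* (A →ₐ[K] A))
  (I : Ideal A) (π : Γ →* Q)

/-- The vectors of `I` on which `Γ` acts through a character of its quotient `Q`. -/
def weightVectorsIn : Set A :=
  {w | w ∈ I ∧ ∃ χ : Q →* Kˣ, ∀ g, σ g w = (χ (π g) : K) • w}

variable {σ I π}

theorem sum_inv_smul_mem_weightVectorsIn [Fintype Γ] (hI : ∀ g, ∀ f ∈ I, σ g f ∈ I)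
    (χ : Q →* Kˣ) {f : A} (hf : f ∈ I) : ∑ g, (χ (π g)⁻¹ : K) • σ g f ∈ weightVectorsIn σ I π := by
  refine ⟨I.sum_mem fun g _ => I.smul_of_tower_mem _ (hI g f hf), χ, fun g => ?_⟩
  rw [map_sum, Finset.smul_sum]
  refine Fintype.sum_equiv (Equiv.mulLeft g) _ _ fun x => ?_
  simp [smul_smul, AlgHom.mul_apply, mul_comm]

theorem invariantsIn_ker_le_span_weightVectorsIn [Finite Γ] [Finite Q]
    [HasEnoughRootsOfUnity K (Monoid.exponent Q)] (hπ : Function.Surjective π)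
    (hΓ : (Nat.card Γ : K) ≠ 0) (hI : ∀ g, ∀ f ∈ I, σ g f ∈ I) :
    invariantsIn σ I π.ker ≤ Submodule.span K (weightVectorsIn σ I π) := by
  classical
  rintro f ⟨hfI, hf⟩
  have := Fintype.ofFinite Γ
  have := Fintype.ofFinite (Q →* Kˣ)
  have hker (g : Γ) : ∑ χ : Q →* Kˣ, (χ (π g)⁻¹ : K) • σ g f =
      if g ∈ π.ker then (Nat.card Q : K) • f else 0 := by
    rw [← Finset.sum_smul]
    split_ifs with hg
    · simp [hf g hg, π.mem_ker.mp hg, ← CommGroup.card_monoidHom_of_hasEnoughRootsOfUnity Q K]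
    · rw [sum_monoidHom_units_apply_eq_zero (inv_ne_one.mpr hg), zero_smul]
  have hsum : ∑ χ : Q →* Kˣ, ∑ g, (χ (π g)⁻¹ : K) • σ g f = (Nat.card Γ : K) • f := by
    rw [Finset.sum_comm, Finset.sum_congr rfl fun g _ => hker g, Finset.sum_ite,
      Finset.sum_const_zero, add_zero, Finset.sum_const, ← Fintype.card_subtype,
      ← Nat.card_eq_fintype_card, ← π.ker.card_mul_index, Subgroup.index_ker,
      MonoidHom.range_eq_top.mpr hπ, Subgroup.card_top, Nat.cast_mul, mul_smul,
      Nat.cast_smul_eq_nsmul K, Nat.cast_smul_eq_nsmul K]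
  rw [← Submodule.smul_mem_iff _ hΓ, ← hsum]
  exact sum_mem fun χ _ => Submodule.subset_span (sum_inv_smul_mem_weightVectorsIn hI χ hfI)

theorem map_multiset_prod_of_weight {ι : Type*} {w : ι → A} {χ : ι → Q →* Kˣ}
    (hw : ∀ i g, σ g (w i) = (χ i (π g) : K) • w i) (T : Multiset ι) (g : Γ) :
    σ g (T.map w).prod = ((T.map χ).prod (π g) : K) • (T.map w).prod := by
  induction T using Multiset.induction with
  | empty => simp
  | cons i T ih =>
    simp only [Multiset.map_cons, Multiset.prod_cons, map_mul, hw, ih, MonoidHom.mul_apply,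
      Units.val_mul]
    rw [smul_mul_smul_comm]

theorem transfer_eq_zero_of_weight_ne_one [Fintype Γ] (hπ : Function.Surjective π) {w : A}
    {χ : Q →* Kˣ} (hw : ∀ g, σ g w = (χ (π g) : K) • w) (hχ : χ ≠ 1) : transfer σ w = 0 := by
  have hne : (Units.coeHom K).comp (χ.comp π) ≠ 1 := fun h => hχ <| MonoidHom.ext fun x => by
    obtain ⟨g, rfl⟩ := hπ x
    simpa using DFunLike.congr_fun h g
  simp only [transfer_apply, hw, ← Finset.sum_smul]
  rw [show ∑ g, (χ (π g) : K) = 0 from sum_hom_units_eq_zero _ hne, zero_smul]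

variable {p : ℕ} [Fact p.Prime] {π : Γ →* Multiplicative (ZMod p × ZMod p)}
  [HasEnoughRootsOfUnity K (Monoid.exponent (Multiplicative (ZMod p × ZMod p)))]

theorem transfer_prod_mem_invariantsIn_pow [Fintype Γ] (hπ : Function.Surjective π)
    {ι : Type*} [Fintype ι] {k : ℕ} (hk : k ≠ 0) (hι : Fintype.card ι = k * p) {w : ι → A}
    (hw : ∀ i, w i ∈ weightVectorsIn σ I π) :
    transfer σ (∏ i, w i) ∈ invariantsIn σ I ⊤ ^ k := by
  choose hwI χ hχ using hw
  have hprod := map_multiset_prod_of_weight hχ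
  by_cases htotal : (Finset.univ.val.map χ).prod = 1
  swap
  · exact transfer_eq_zero_of_weight_ne_one hπ (hprod Finset.univ.val) htotal ▸ zero_mem _
  obtain ⟨e⟩ := CommGroup.monoidHom_mulEquiv_of_hasEnoughRootsOfUnity
    (Multiplicative (ZMod p × ZMod p)) K
  have hlabel (T : Multiset ι) :
      (T.map fun i => (e (χ i)).toAdd).sum = 0 ↔ (T.map χ).prod = 1 := by
    rw [← e.map_eq_one_iff, map_multiset_prod, Multiset.map_map, ← toAdd_eq_zero,
      toAdd_multiset_sum, Multiset.map_map]
    rfl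
  obtain ⟨L, hLcard, hLsum, hL⟩ := exists_zeroSum_partition (p := p) (V := ZMod p × ZMod p)
    (by simp) (fun i => (e (χ i)).toAdd) hk Finset.univ.val ((hlabel _).mpr htotal) hι.ge
  have hblock : ∀ T ∈ L, (T.map w).prod ∈ invariantsIn σ I ⊤ := fun T hT => by
    obtain ⟨hT0, hTsum⟩ := hL T hT
    refine ⟨?_, fun g _ => by simp [hprod T g, (hlabel T).mp hTsum]⟩
    obtain ⟨i, hi⟩ := Multiset.exists_mem_of_ne_zero hT0
    exact I.mem_of_dvd (Multiset.dvd_prod (Multiset.mem_map_of_mem w hi)) (hwI i)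
  have hfactor : (Finset.univ.val.map w).prod = (L.map fun T => (T.map w).prod).prod := by
    rw [← hLsum, ← Multiset.join, Multiset.map_join, Multiset.prod_join, Multiset.map_map,
      Function.comp_def]
  have hfixed (g : Γ) : σ g (Finset.univ.val.map w).prod = (Finset.univ.val.map w).prod := by
    rw [hprod, htotal, MonoidHom.one_apply, Units.val_one, one_smul]
  rw [Finset.prod, transfer_of_forall_map_eq hfixed, hfactor, ← hLcard,
    ← Multiset.card_map fun T => (T.map w).prod]
  exact Submodule.smul_mem _ _ (multiset_prod_mem_pow_card _ _ (by simpa using hblock))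

theorem mem_invariantsIn_top_pow [Finite Γ] (hπ : Function.Surjective π)
    (hΓ : (Nat.card Γ : K) ≠ 0) (hI : ∀ g, ∀ f ∈ I, σ g f ∈ I) {f : A} (hfΓ : ∀ g, σ g f = f)
    {k : ℕ} (hf : f ∈ invariantsIn σ I π.ker ^ (k * p)) : f ∈ invariantsIn σ I ⊤ ^ k := by
  have := Fintype.ofFinite Γ
  rcases eq_or_ne k 0 with rfl | hk
  · rwa [zero_mul] at hf
  rw [← Fintype.card_fin (k * p)] at hf
  refine mem_of_transfer_mem hΓ hfΓ <| Submodule.mem_comap.mp <| span_pow_card_le ?_ <|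
    pow_le_pow_left₀ bot_le (invariantsIn_ker_le_span_weightVectorsIn hπ hΓ hI) _ hf
  exact fun w hw => transfer_prod_mem_invariantsIn_pow hπ hk (Fintype.card_fin _) hw

end WeightVectors

theorem ElementaryTower.mem_invariantsIn_pow {K A G : Type*} [Field K] [IsAlgClosed K]
    [CommRing A] [Algebra K A] [Group G] [Finite G] {σ : G →* (A →ₐ[K] A)} {I : Ideal A}
    (hI : ∀ g, ∀ f ∈ I, σ g f ∈ I) {N H : Subgroup G} {m : ℕ} (h : ElementaryTower N H m)
    (hH : (Nat.card H : K) ≠ 0) {f : A} (hf : ∀ g ∈ H, σ g f = f) {k : ℕ}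
    (hfN : f ∈ invariantsIn σ I N ^ (k * m)) : f ∈ invariantsIn σ I H ^ k := by
  induction h generalizing k with
  | refl => rwa [mul_one] at hfN
  | @step M H q p hp π hπ hM _ ih =>
    have := Fact.mk hp
    have hMH : M ≤ H := hM ▸ H.map_subtype_le _
    have hMK : (Nat.card M : K) ≠ 0 :=
      ne_zero_of_dvd_ne_zero hH (Nat.cast_dvd_cast (Subgroup.card_dvd_of_le hMH))
    have : NeZero (Monoid.exponent (Multiplicative (ZMod p × ZMod p)) : K) :=
      ⟨ne_zero_of_dvd_ne_zero hH <| Nat.cast_dvd_cast <|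
        Group.exponent_dvd_nat_card.trans (Subgroup.card_dvd_of_surjective π hπ)⟩
    have hfM : f ∈ invariantsIn σ I M ^ (k * p) :=
      ih hMK (fun g hg => hf g (hMH hg)) (by rwa [mul_assoc, mul_comm p])
    rw [← hM, ← invariantsIn_comp] at hfM
    simpa [invariantsIn_comp, ← MonoidHom.range_eq_map] using
      mem_invariantsIn_top_pow hπ hH (fun g => hI g) (fun g => hf g g.2) hfM

section HomogeneousComponents

variable {σ τ R : Type*} [CommSemiring R]

theorem homogeneousComponent_mul (p q : MvPolynomial σ R) (n : ℕ) :
    homogeneousComponent n (p * q) = ∑ ij ∈ Finset.HasAntidiagonal.antidiagonal n,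
      homogeneousComponent ij.1 p * homogeneousComponent ij.2 q := by
  let := gradedAlgebra (σ := σ) (R := R)
  have hdecompose (f : MvPolynomial σ R) (k : ℕ) :
      (DirectSum.decompose (homogeneousSubmodule σ R) f k : MvPolynomial σ R) =
        homogeneousComponent k f := decomposition.decompose'_apply f k
  have h := DirectSum.coe_mul_apply_eq_sum_antidiagonal (homogeneousSubmodule σ R)
    (DirectSum.decompose (homogeneousSubmodule σ R) p)
    (DirectSum.decompose (homogeneousSubmodule σ R) q) n
  rw [← DirectSum.decompose_mul] at h
  simpa only [hdecompose] using h

theorem homogeneousComponent_map_of_forall_isHomogeneous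
    (φ : MvPolynomial σ R →ₗ[R] MvPolynomial τ R)
    (hφ : ∀ k, ∀ f, f.IsHomogeneous k → (φ f).IsHomogeneous k) (n : ℕ) (f : MvPolynomial σ R) :
    homogeneousComponent n (φ f) = φ (homogeneousComponent n f) := by
  have hcomponent (k : ℕ) : homogeneousComponent n (φ (homogeneousComponent k f)) =
      if n = k then φ (homogeneousComponent n f) else 0 := by
    rw [homogeneousComponent_of_mem (hφ k _ (homogeneousComponent_isHomogeneous k f))]
    split_ifs with h
    · rw [h]
    · rfl
  conv_lhs => rw [← sum_homogeneousComponent f, map_sum, map_sum]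
  rw [Finset.sum_congr rfl fun k _ => hcomponent k, Finset.sum_ite_eq, ite_eq_left_iff]
  intro hn
  rw [homogeneousComponent_eq_zero n f (by simpa using hn), map_zero]

theorem mem_idealOfVars_iff {f : MvPolynomial σ R} :
    f ∈ idealOfVars σ R ↔ homogeneousComponent 0 f = 0 := by
  rw [← pow_one (idealOfVars σ R), mem_pow_idealOfVars_iff', homogeneousComponent_zero]
  simp [Finsupp.degree_eq_zero_iff]

end HomogeneousComponents

section PolynomialAction

variable {F G : Type*} [Field F] [Group G] {d : ℕ}

/-- The action `polyAct` as a homomorphism to algebra endomorphisms. The inverse is needed because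
substitution of variables reverses products. -/
noncomputable def polyActHom (ρ : G →* Matrix.GeneralLinearGroup (Fin d) F) :
    G →* (MvPolynomial (Fin d) F →ₐ[F] MvPolynomial (Fin d) F) where
  toFun g := aeval fun i => ∑ j, ((ρ g⁻¹).val i j) • X j
  map_one' := by
    refine algHom_ext fun i => ?_
    simp [Matrix.one_apply]
  map_mul' g h := by
    refine algHom_ext fun i => ?_
    simp only [AlgHom.mul_apply, aeval_X, mul_inv_rev, map_mul, Units.val_mul, Matrix.mul_apply,
      map_sum, map_smul, Finset.smul_sum, Finset.sum_smul, smul_smul]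
    exact Finset.sum_comm

variable {ρ : G →* Matrix.GeneralLinearGroup (Fin d) F}

theorem isPolyInvariant_iff {f : MvPolynomial (Fin d) F} :
    IsPolyInvariant ρ f ↔ ∀ g, polyActHom ρ g f = f :=
  ⟨fun h g => h g⁻¹, fun h g => inv_inv g ▸ h g⁻¹⟩

theorem polyActHom_isHomogeneous (g : G) {f : MvPolynomial (Fin d) F} {k : ℕ}
    (hf : f.IsHomogeneous k) : (polyActHom ρ g f).IsHomogeneous k := by
  rw [← one_mul k]
  refine hf.aeval _ fun i => IsHomogeneous.sum _ _ _ fun j _ => ?_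
  rw [smul_eq_C_mul]
  exact isHomogeneous_C_mul_X _ j

theorem homogeneousComponent_polyActHom (g : G) (f : MvPolynomial (Fin d) F) (k : ℕ) :
    homogeneousComponent k (polyActHom ρ g f) = polyActHom ρ g (homogeneousComponent k f) :=
  homogeneousComponent_map_of_forall_isHomogeneous (polyActHom ρ g).toLinearMap
    (fun _ _ hf => polyActHom_isHomogeneous g hf) k f

theorem polyActHom_mem_idealOfVars (g : G) {f : MvPolynomial (Fin d) F}
    (hf : f ∈ idealOfVars (Fin d) F) : polyActHom ρ g f ∈ idealOfVars (Fin d) F := by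
  rw [mem_idealOfVars_iff] at hf ⊢
  rw [homogeneousComponent_polyActHom, hf, map_zero]

theorem isPolyInvariant_homogeneousComponent {f : MvPolynomial (Fin d) F}
    (hf : IsPolyInvariant ρ f) (k : ℕ) : IsPolyInvariant ρ (homogeneousComponent k f) := by
  rw [isPolyInvariant_iff] at hf ⊢
  exact fun g => by rw [← homogeneousComponent_polyActHom, hf g]

theorem noetherBoundLe_of_homogeneous_mem_sq {s : ℕ}
    (h : ∀ k > s, ∀ f : MvPolynomial (Fin d) F, f.IsHomogeneous k → IsPolyInvariant ρ f →
      f ∈ invariantsIn (polyActHom ρ) (idealOfVars (Fin d) F) ⊤ ^ 2) : NoetherBoundLe ρ s := by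
  set B := Algebra.adjoin F {h | IsPolyInvariant ρ h ∧ h.totalDegree ≤ s}
  suffices hhom : ∀ k, ∀ f : MvPolynomial (Fin d) F, f.IsHomogeneous k → IsPolyInvariant ρ f →
      f ∈ B by
    intro f hf
    rw [← sum_homogeneousComponent f]
    exact sum_mem fun k _ => hhom k _ (homogeneousComponent_isHomogeneous k f)
      (isPolyInvariant_homogeneousComponent hf k)
  intro k
  induction k using Nat.strong_induction_on with
  | _ k ih =>
    intro f hf hinv
    by_cases hk : k ≤ s
    · exact Algebra.subset_adjoin ⟨hinv, hf.totalDegree_le.trans hk⟩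
    suffices hle : invariantsIn (polyActHom ρ) (idealOfVars (Fin d) F) ⊤ ^ 2 ≤
        (Subalgebra.toSubmodule B).comap (homogeneousComponent k) by
      simpa [homogeneousComponent_eq_self hf] using hle (h k (by omega) f hf hinv)
    rw [sq, Submodule.mul_le]
    intro u hu v hv
    rw [mem_invariantsIn_top, ← isPolyInvariant_iff, mem_idealOfVars_iff] at hu hv
    rw [Submodule.mem_comap, homogeneousComponent_mul]
    refine sum_mem fun ⟨i, j⟩ hij => ?_
    rw [Finset.HasAntidiagonal.mem_antidiagonal] at hij
    rcases Nat.eq_zero_or_pos i with rfl | hi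
    · simp [hu.1]
    rcases Nat.eq_zero_or_pos j with rfl | hj
    · simp [hv.1]
    exact B.mul_mem
      (ih i (by omega) _ (homogeneousComponent_isHomogeneous i u)
        (isPolyInvariant_homogeneousComponent hu.2 i))
      (ih j (by omega) _ (homogeneousComponent_isHomogeneous j v)
        (isPolyInvariant_homogeneousComponent hv.2 j))

theorem ElementaryTower.noetherBoundLe_of_isAlgClosed [IsAlgClosed F] [Finite G]
    (hG : (Nat.card G : F) ≠ 0) {H : Subgroup G} {m : ℕ} (hH : ElementaryTower ⊥ H m)
    (ρ : G →* Matrix.GeneralLinearGroup (Fin d) F) :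
    NoetherBoundLe ρ ((H.index + 1) * m - 1) := by
  set I := idealOfVars (Fin d) F
  have hI (g : G) : ∀ f ∈ I, polyActHom ρ g f ∈ I := fun f => polyActHom_mem_idealOfVars g
  refine noetherBoundLe_of_homogeneous_mem_sq fun k hk f hf hinv => ?_
  rw [isPolyInvariant_iff] at hinv
  have hm : (H.index + 1) * m ≠ 0 := mul_ne_zero (Nat.succ_ne_zero _) hH.ne_zero
  have hbot : invariantsIn (polyActHom ρ) I ⊥ = I.restrictScalars F := by
    ext u
    simp [mem_invariantsIn]
  have hpow : f ∈ invariantsIn (polyActHom ρ) I ⊥ ^ ((H.index + 1) * m) := by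
    rw [hbot, ← Submodule.restrictScalars_pow hm, Submodule.restrictScalars_mem,
      mem_pow_idealOfVars_iff]
    intro x hx
    have : x.degree = k := (hf.degree_eq_sum_deg_support hx).symm
    omega
  have hcard : (Nat.card H : F) ≠ 0 :=
    ne_zero_of_dvd_ne_zero hG (Nat.cast_dvd_cast H.card_subgroup_dvd_card)
  exact mem_invariantsIn_top_sq hG hI hinv <|
    hH.mem_invariantsIn_pow hI hcard (fun g _ => hinv g) hpow

end PolynomialAction

section BaseChange

variable {σ F K : Type*} [Field F] [Field K] [Algebra F K]

theorem mem_span_of_map_mem_span {T : Set (MvPolynomial σ F)} {f : MvPolynomial σ F}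
    (hf : map (algebraMap F K) f ∈ Submodule.span K (map (algebraMap F K) '' T)) :
    f ∈ Submodule.span F T := by
  obtain ⟨r, hr⟩ := (Algebra.linearMap F K).exists_leftInverse_of_injective
    (LinearMap.ker_eq_bot.mpr (algebraMap F K).injective)
  replace hr : r 1 = 1 := by simpa using LinearMap.congr_fun hr 1
  let retract : MvPolynomial σ K →ₗ[F] MvPolynomial σ F :=
    (TensorProduct.lid F _).toLinearMap ∘ₗ r.rTensor _ ∘ₗ
      ((algebraTensorAlgEquiv F K).symm.toLinearMap.restrictScalars F)
  have retract_smul_map (a : K) (w : MvPolynomial σ F) :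
      retract (a • map (algebraMap F K) w) = r a • w := by
    simp [retract, TensorProduct.smul_tmul']
  suffices h : ∀ u ∈ Submodule.span K (map (algebraMap F K) '' T), ∀ a : K,
      retract (a • u) ∈ Submodule.span F T by
    have hf' := h _ hf 1
    rwa [retract_smul_map, hr, one_smul] at hf'
  intro u hu
  induction hu using Submodule.span_induction with
  | mem _ hw =>
    obtain ⟨w, hw, rfl⟩ := hw
    intro a
    rw [retract_smul_map]
    exact Submodule.smul_mem _ _ (Submodule.subset_span hw)
  | zero => simp
  | add _ _ _ _ hu hv =>
    intro a
    rw [smul_add, map_add]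
    exact add_mem (hu a) (hv a)
  | smul b _ _ hu =>
    intro a
    rw [smul_smul]
    exact hu (a * b)

theorem mem_adjoin_of_map_mem_adjoin {T : Set (MvPolynomial σ F)} {f : MvPolynomial σ F}
    (hf : map (algebraMap F K) f ∈ Algebra.adjoin K (map (algebraMap F K) '' T)) :
    f ∈ Algebra.adjoin F T := by
  rw [← Subalgebra.mem_toSubmodule, Algebra.adjoin_eq_span] at hf ⊢
  refine mem_span_of_map_mem_span (K := K) ?_
  have hclosure : map (algebraMap F K) '' (Submonoid.closure T : Set (MvPolynomial σ F)) =
      (Submonoid.closure (map (algebraMap F K) '' T) : Set (MvPolynomial σ K)) :=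
    congrArg SetLike.coe (MonoidHom.map_mclosure (map (σ := σ) (algebraMap F K)).toMonoidHom T)
  rwa [hclosure]

variable {G : Type*} [Group G] {d : ℕ} {ρ : G →* Matrix.GeneralLinearGroup (Fin d) F}

theorem polyActHom_map (g : G) (f : MvPolynomial (Fin d) F) :
    polyActHom ((Matrix.GeneralLinearGroup.map (algebraMap F K)).comp ρ) g
        (map (algebraMap F K) f) = map (algebraMap F K) (polyActHom ρ g f) := by
  induction f using MvPolynomial.induction_on with
  | C a => simp [polyActHom]
  | add p q hp hq => simp only [map_add, hp, hq]
  | mul_X p i hp =>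
    rw [map_mul, map_mul, hp, map_mul, map_mul]
    congr 1
    simp only [polyActHom, MonoidHom.coe_mk, OneHom.coe_mk, map_X, aeval_X, map_sum,
      smul_eq_C_mul, map_mul, map_C]
    rfl

theorem totalDegree_polyActHom_monomial_le (g : G) (x : Fin d →₀ ℕ) (a : F) :
    (polyActHom ρ g (monomial x a)).totalDegree ≤ x.degree :=
  (polyActHom_isHomogeneous g (isHomogeneous_monomial a rfl)).totalDegree_le

theorem mem_span_map_invariants [Finite G] (hG : (Nat.card G : K) ≠ 0)
    {u : MvPolynomial (Fin d) K}
    (hu : IsPolyInvariant ((Matrix.GeneralLinearGroup.map (algebraMap F K)).comp ρ) u) :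
    u ∈ Submodule.span K (map (algebraMap F K) ''
      {h | IsPolyInvariant ρ h ∧ h.totalDegree ≤ u.totalDegree}) := by
  have := Fintype.ofFinite G
  rw [isPolyInvariant_iff] at hu
  refine mem_of_transfer_mem hG hu ?_
  conv => enter [2, 2]; rw [u.as_sum]
  rw [map_sum]
  refine sum_mem fun x hx => ?_
  have hmonomial : transfer (polyActHom ((Matrix.GeneralLinearGroup.map (algebraMap F K)).comp ρ))
      (monomial x (coeff x u)) =
        coeff x u • map (algebraMap F K) (transfer (polyActHom ρ) (monomial x 1)) := by
    rw [← mul_one (coeff x u), ← smul_eq_mul, ← smul_monomial, map_smul, smul_eq_mul, mul_one]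
    simp only [transfer_apply, map_sum, ← polyActHom_map, map_monomial, map_one]
  rw [hmonomial]
  refine Submodule.smul_mem _ _ (Submodule.subset_span ⟨_, ⟨?_, ?_⟩, rfl⟩)
  · exact isPolyInvariant_iff.mpr fun g => map_transfer _ g _
  · rw [transfer_apply]
    exact totalDegree_finsetSum_le fun g _ =>
      (totalDegree_polyActHom_monomial_le g x 1).trans (le_totalDegree hx)

theorem noetherBoundLe_of_map [Finite G] (hG : (Nat.card G : K) ≠ 0) {s : ℕ}
    (h : NoetherBoundLe ((Matrix.GeneralLinearGroup.map (algebraMap F K)).comp ρ) s) :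
    NoetherBoundLe ρ s := by
  intro f hf
  rw [isPolyInvariant_iff] at hf
  have hfK := h (map (algebraMap F K) f)
    (isPolyInvariant_iff.mpr fun g => by rw [polyActHom_map, hf g])
  refine mem_adjoin_of_map_mem_adjoin (K := K) (Algebra.adjoin_le ?_ hfK)
  rintro u ⟨hu, hus⟩
  have hsubset : {h | IsPolyInvariant ρ h ∧ h.totalDegree ≤ u.totalDegree} ⊆
      {h | IsPolyInvariant ρ h ∧ h.totalDegree ≤ s} := fun w hw => ⟨hw.1, hw.2.trans hus⟩
  exact Algebra.span_le_adjoin K _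
    (Submodule.span_mono (Set.image_mono hsubset) (mem_span_map_invariants hG hu))

end BaseChange

theorem ElementaryTower.noetherBoundLe {F G : Type*} [Field F] [Group G] [Finite G]
    (hG : (Nat.card G : F) ≠ 0) {H : Subgroup G} {m : ℕ} (hH : ElementaryTower ⊥ H m) {d : ℕ}
    (ρ : G →* Matrix.GeneralLinearGroup (Fin d) F) :
    NoetherBoundLe ρ ((H.index + 1) * m - 1) := by
  have hG' : (Nat.card G : AlgebraicClosure F) ≠ 0 := by
    rwa [← map_natCast (algebraMap F (AlgebraicClosure F)), map_ne_zero]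
  exact noetherBoundLe_of_map hG' (ElementaryTower.noetherBoundLe_of_isAlgClosed hG' hH _)

section PermutationRepresentation

variable (F G α : Type*) [Field F] [Group G] [Fintype α] [MulAction G α]

/-- The permutation representation of `G` on `F ^ α`, in the coordinates numbered by
`Fintype.equivFin α`. -/
noncomputable def permutationRep : G →* Matrix.GeneralLinearGroup (Fin (Fintype.card α)) F :=
  MonoidHom.toHomUnits <| Matrix.permMatrixHom.comp <|
    (Fintype.equivFin α).permCongrHom.toMonoidHom.comp (MulAction.toPermHom G α)

variable {F G α}

theorem coe_permutationRep_inv (g : G) : (permutationRep F G α g⁻¹ : Matrix _ _ F) =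
    ((Fintype.equivFin α).permCongr (MulAction.toPerm g)).permMatrix F := by
  rw [← inv_inv ((Fintype.equivFin α).permCongr _), ← Matrix.permMatrixHom_apply]
  exact congrArg Matrix.permMatrixHom
    (map_inv ((Fintype.equivFin α).permCongrHom.toMonoidHom.comp (MulAction.toPermHom G α)) g)

theorem polyActHom_permutationRep_rename (g : G) (f : MvPolynomial α F) :
    polyActHom (permutationRep F G α) g (rename (Fintype.equivFin α) f) =
      rename (Fintype.equivFin α) (rename (g • ·) f) := by
  induction f using MvPolynomial.induction_on with
  | C a => simp [polyActHom]
  | add p q hp hq => simp only [map_add, hp, hq]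
  | mul_X p i hp =>
    simp only [map_mul, hp]
    congr 1
    simp only [polyActHom, MonoidHom.coe_mk, OneHom.coe_mk, coe_permutationRep_inv]
    simp [PEquiv.toMatrix_apply]

theorem mem_adjoin_of_noetherBoundLe_permutationRep {s : ℕ}
    (hs : NoetherBoundLe (permutationRep F G α) s) {f : MvPolynomial α F}
    (hf : ∀ g : G, rename (g • ·) f = f) :
    f ∈ Algebra.adjoin F {h | (∀ g : G, rename (g • ·) h = h) ∧ h.totalDegree ≤ s} := by
  set e := Fintype.equivFin α
  have rename_symm_rename (u : MvPolynomial α F) : rename e.symm (rename e u) = u := by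
    simp [rename_rename]
  have rename_rename_symm (u : MvPolynomial (Fin (Fintype.card α)) F) :
      rename e (rename e.symm u) = u := by
    simp [rename_rename]
  have hmem := hs (rename e f) (isPolyInvariant_iff.mpr fun g => by
    rw [polyActHom_permutationRep_rename, hf g])
  rw [← rename_symm_rename f]
  refine Algebra.adjoin_le (S := (Algebra.adjoin F _).comap (rename e.symm)) ?_ hmem
  rintro u ⟨hu, hus⟩
  refine Algebra.subset_adjoin ⟨fun g => ?_, (totalDegree_rename_le _ u).trans hus⟩
  change rename (g • ·) (rename e.symm u) = rename e.symm u
  rw [← rename_symm_rename (rename (g • ·) (rename e.symm u)),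
    ← polyActHom_permutationRep_rename, rename_rename_symm, isPolyInvariant_iff.mp hu g]

end PermutationRepresentation

section Supports

variable {σ τ R : Type*} [CommSemiring R]

theorem coeff_aeval_C_mul_X [Fintype σ] (c : σ → R) (p : MvPolynomial σ R) (e : σ →₀ ℕ) :
    coeff e (aeval (fun i => C (c i) * X i : σ → MvPolynomial σ R) p) =
      (∏ i, c i ^ e i) * coeff e p := by
  classical
  induction p using MvPolynomial.induction_on' with
  | monomial u a =>
    have hmonomial : aeval (fun i => C (c i) * X i : σ → MvPolynomial σ R) (monomial u a) =
        monomial u ((∏ i, c i ^ u i) * a) := by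
      rw [aeval_monomial, Finsupp.prod_fintype _ _ (by simp), monomial_eq (a := _ * a),
        Finsupp.prod_fintype _ _ (by simp)]
      simp only [mul_pow, Finset.prod_mul_distrib, algebraMap_eq, map_mul, map_prod, map_pow]
      ring
    rw [hmonomial, coeff_monomial, coeff_monomial]
    split_ifs with h
    · rw [h]
    · rw [mul_zero]
  | add p q hp hq => rw [map_add, coeff_add, hp, hq, coeff_add, mul_add]

theorem totalDegree_aeval_le_of_isHomogeneous_one {S : Type*} [CommSemiring S] [Algebra R S]
    {w : σ → MvPolynomial τ S} (hw : ∀ i, (w i).IsHomogeneous 1) (p : MvPolynomial σ R) :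
    (aeval w p).totalDegree ≤ p.totalDegree := by
  conv_lhs => rw [p.as_sum, map_sum]
  refine totalDegree_finsetSum_le fun x hx => ?_
  refine ((isHomogeneous_monomial _ rfl).aeval w hw).totalDegree_le.trans ?_
  rw [one_mul]
  exact le_totalDegree hx

/-- The polynomials all of whose monomials have their exponent in the monoid `E`. -/
noncomputable def restrictSupportSubalgebra (R : Type*) [CommSemiring R]
    (E : AddSubmonoid (σ →₀ ℕ)) : Subalgebra R (MvPolynomial σ R) :=
  (restrictSupport R (E : Set (σ →₀ ℕ))).toSubalgebra
    (by
      rw [← C_1, ← monomial_zero']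
      exact (monomial_mem_restrictSupport R).mpr (Or.inl E.zero_mem))
    (fun p q hp hq e he => by
      classical
      obtain ⟨u, hu, v, hv, rfl⟩ := Finset.mem_add.mp (support_mul p q he)
      exact E.add_mem (hp hu) (hq hv))

end Supports

section TwoCharacters

variable {F K α β : Type*} [Field F] [Field K] [Algebra F K]

/-- The substitution of `a i * x₀` for the variables of the first kind and of `b j * x₁` for those
of the second kind. -/
noncomputable def weightedSubst (F : Type*) [Field F] [Algebra F K] (a : α → K) (b : β → K) :
    MvPolynomial (α ⊕ β) F →ₐ[F] MvPolynomial (Fin 2) K :=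
  aeval (Sum.elim (fun i => C (a i) * X 0) fun j => C (b j) * X 1)

theorem weightedSubst_X_pow_mul_X_pow (a : α → K) (b : β → K) (i : α) (j : β) (k l : ℕ) :
    weightedSubst F a b (X (Sum.inl i) ^ k * X (Sum.inr j) ^ l) =
      monomial (Finsupp.single 0 k + Finsupp.single 1 l) (a i ^ k * b j ^ l) := by
  rw [weightedSubst, map_mul, map_pow, map_pow, aeval_X, aeval_X]
  simp only [Sum.elim_inl, Sum.elim_inr, mul_pow, X_pow_eq_monomial, ← C_pow, C_mul_monomial,
    monomial_mul, mul_one]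

theorem coeff_weightedSubst_smul (s t : K) (a : α → K) (b : β → K) (u : MvPolynomial (α ⊕ β) F)
    (e : Fin 2 →₀ ℕ) : coeff e (weightedSubst F (s • a) (t • b) u) =
      s ^ e 0 * t ^ e 1 * coeff e (weightedSubst F a b u) := by
  have hcomp : weightedSubst F (s • a) (t • b) =
      ((aeval fun i => C (![s, t] i) * X i :
        MvPolynomial (Fin 2) K →ₐ[K] MvPolynomial (Fin 2) K).restrictScalars F).comp
        (weightedSubst F a b) := by
    refine algHom_ext fun i => ?_
    rcases i with i | i <;> simp [weightedSubst] <;> ring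
  rw [hcomp, AlgHom.comp_apply, AlgHom.restrictScalars_apply, coeff_aeval_C_mul_X,
    Fin.prod_univ_two, Matrix.cons_val_zero, Matrix.cons_val_one, Matrix.cons_val_fin_one]

theorem totalDegree_weightedSubst_le (a : α → K) (b : β → K) (u : MvPolynomial (α ⊕ β) F) :
    (weightedSubst F a b u).totalDegree ≤ u.totalDegree := by
  refine totalDegree_aeval_le_of_isHomogeneous_one (fun i => ?_) u
  rcases i with i | i <;> exact isHomogeneous_C_mul_X _ _

variable {G : Type*} [Group G] [MulAction G α] [MulAction G β] {a : α → K} {b : β → K}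
  {u : MvPolynomial (α ⊕ β) F} {e : Fin 2 →₀ ℕ}

theorem pow_mul_pow_eq_one_of_coeff_weightedSubst_ne_zero
    (hu : ∀ g : G, rename (g • ·) u = u) (he : coeff e (weightedSubst F a b u) ≠ 0) (g : G)
    {s t : K} (ha : ∀ i, a (g • i) = s * a i) (hb : ∀ j, b (g • j) = t * b j) :
    s ^ e 0 * t ^ e 1 = 1 := by
  have hrename : weightedSubst F a b (rename (g • ·) u) = weightedSubst F (s • a) (t • b) u := by
    rw [weightedSubst, aeval_rename, weightedSubst]
    congr 2
    ext i
    rcases i with i | i <;> simp [ha, hb]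
  rw [hu g] at hrename
  have hcoeff := coeff_weightedSubst_smul s t a b u e
  rw [← hrename] at hcoeff
  exact (mul_eq_right₀ he).mp hcoeff.symm

theorem pow_eq_one_of_coeff_weightedSubst_ne_zero
    (hu : ∀ g : G, rename (g • ·) u = u) (he : coeff e (weightedSubst F a b u) ≠ 0)
    (he0 : e 0 = 0) (g : G) {t : K} (hb : ∀ j, b (g • j) = t * b j) : t ^ e 1 = 1 := by
  have he' : coeff e (weightedSubst F (0 : α → K) b u) ≠ 0 := by
    have h := coeff_weightedSubst_smul 0 1 a b u e
    rw [he0, pow_zero, one_pow, mul_one, one_mul, zero_smul, one_smul] at h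
    rwa [h]
  simpa using pow_mul_pow_eq_one_of_coeff_weightedSubst_ne_zero (s := 1) hu he' g (by simp) hb

end TwoCharacters

section LowerBound

/-- The exponents `e` for which `x₀ ^ e₀ * x₁ ^ e₁` may occur in a polynomial in invariants of
degree less than `M + k - 1`. Excluding `(M, k - 1)` leaves a monoid, because `M ∣ e₀` forces one
of two summands of `(M, k - 1)` to have `e₀ = 0`. -/
def exponentsWithoutTop (M k : ℕ) (hM : M ≠ 0) : AddSubmonoid (Fin 2 →₀ ℕ) where
  carrier := {e | M ∣ e 0 ∧ (e 0 = 0 → k ∣ e 1) ∧ ¬(e 0 = M ∧ e 1 = k - 1)}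
  zero_mem' := by simp [hM.symm]
  add_mem' := by
    have eq_zero_of_dvd {x : ℕ} (hx : k ∣ x) (hle : x ≤ k - 1) : x = 0 := by
      rcases Nat.eq_zero_or_pos k with rfl | hk
      · omega
      · exact Nat.eq_zero_of_dvd_of_lt hx (by omega)
    rintro u v ⟨hu0, hu1, hu⟩ ⟨hv0, hv1, hv⟩
    simp only [Set.mem_ofPred_eq, Finsupp.add_apply]
    refine ⟨dvd_add hu0 hv0, fun h => dvd_add (hu1 (by omega)) (hv1 (by omega)), ?_⟩
    rintro ⟨h0, h1⟩
    rcases Nat.eq_zero_or_pos (u 0) with hu' | hu'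
    · have := eq_zero_of_dvd (hu1 hu') (by omega)
      exact hv ⟨by omega, by omega⟩
    · have := Nat.le_of_dvd hu' hu0
      have hv' : v 0 = 0 := by omega
      have := eq_zero_of_dvd (hv1 hv') (by omega)
      exact hu ⟨by omega, by omega⟩

variable {F K G H : Type*} [Field F] [Field K] [Algebra F K] [Group G] [Group H]
  {ι : H →* G} {θ : H →* Kˣ} {χ : G →* Kˣ}

theorem extend_monoidHom_mul (hι : Function.Injective ι) (x : H) (g : G) :
    Function.extend ι (fun y => (θ y : K)) 0 (ι x * g) =
      θ x * Function.extend ι (fun y => (θ y : K)) 0 g := by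
  by_cases hg : ∃ y, ι y = g
  · obtain ⟨y, rfl⟩ := hg
    rw [← map_mul, hι.extend_apply, hι.extend_apply, map_mul, Units.val_mul]
  · have hxg : ¬∃ y, ι y = ι x * g := fun ⟨y, hy⟩ =>
      hg ⟨x⁻¹ * y, by rw [map_mul, hy, map_inv, inv_mul_cancel_left]⟩
    rw [Function.extend_apply' _ _ _ hg, Function.extend_apply' _ _ _ hxg]
    simp

theorem orderOf_dvd_of_coeff_weightedSubst_ne_zero (hι : Function.Injective ι)
    (hχ : χ.comp ι = 1) {u : MvPolynomial (G ⊕ G) F} (hu : ∀ g : G, rename (g • ·) u = u)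
    {e : Fin 2 →₀ ℕ}
    (he : coeff e (weightedSubst F (Function.extend ι (fun y => (θ y : K)) 0)
      (fun g => (χ g : K)) u) ≠ 0) :
    orderOf θ ∣ e 0 ∧ (e 0 = 0 → orderOf χ ∣ e 1) := by
  constructor
  · refine orderOf_dvd_of_pow_eq_one (MonoidHom.ext fun x => Units.ext ?_)
    have hχx : χ (ι x) = 1 := DFunLike.congr_fun hχ x
    simpa using pow_mul_pow_eq_one_of_coeff_weightedSubst_ne_zero (t := 1) hu he (ι x)
      (extend_monoidHom_mul hι x) (fun g => by simp [hχx])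
  · refine fun he0 => orderOf_dvd_of_pow_eq_one (MonoidHom.ext fun g => Units.ext ?_)
    simpa using pow_eq_one_of_coeff_weightedSubst_ne_zero hu he he0 g (t := χ g) (fun j => by simp)

theorem coeff_weightedSubst_sum [Fintype G] [Finite H] (hι : Function.Injective ι)
    (hχ : χ.comp ι = 1) (hθ : orderOf θ ≠ 0) (l : ℕ) :
    coeff (Finsupp.single 0 (orderOf θ) + Finsupp.single 1 l)
      (weightedSubst F (Function.extend ι (fun y => (θ y : K)) 0) (fun g => (χ g : K))
        (∑ g : G, X (Sum.inl g) ^ orderOf θ * X (Sum.inr g) ^ l)) = Nat.card H := by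
  have := Fintype.ofFinite H
  simp only [map_sum, weightedSubst_X_pow_mul_X_pow, coeff_sum, coeff_monomial, if_true]
  rw [← Fintype.sum_of_injective ι hι (fun _ => 1)]
  · simp
  · intro g hg
    rw [Function.extend_apply' _ _ _ hg, Pi.zero_apply, zero_pow hθ, zero_mul]
  · intro x
    have hχx : χ (ι x) = 1 := DFunLike.congr_fun hχ x
    have hθx : (θ x : K) ^ orderOf θ = 1 := by
      rw [← Units.val_pow_eq_pow_val, ← MonoidHom.pow_apply, pow_orderOf_eq_one,
        MonoidHom.one_apply, Units.val_one]
    rw [hι.extend_apply, hχx, hθx, Units.val_one, one_pow, one_mul]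

theorem not_noetherBoundLe_permutationRep [Fintype G] (hι : Function.Injective ι)
    (hχ : χ.comp ι = 1) (hH : (Nat.card H : K) ≠ 0) :
    ¬NoetherBoundLe (permutationRep F G (G ⊕ G)) (orderOf θ + orderOf χ - 2) := by
  have : Finite H := Finite.of_injective ι hι
  have hθ : 0 < orderOf θ := orderOf_pos θ
  have hχ0 : 0 < orderOf χ := orderOf_pos χ
  intro hbound
  set Ψ := weightedSubst F (Function.extend ι (fun y => (θ y : K)) 0) (fun g => (χ g : K))
  set E := exponentsWithoutTop (orderOf θ) (orderOf χ) hθ.ne'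
  have hinvariant {u : MvPolynomial (G ⊕ G) F} (hu : ∀ g : G, rename (g • ·) u = u) :
      Ψ u ∈ restrictSupportSubalgebra K E := by
    refine Algebra.adjoin_le
      (S := ((restrictSupportSubalgebra K E).restrictScalars F).comap Ψ) ?_
      (mem_adjoin_of_noetherBoundLe_permutationRep hbound hu)
    rintro v ⟨hv, hvdeg⟩ e he
    obtain ⟨h0, h1⟩ := orderOf_dvd_of_coeff_weightedSubst_ne_zero hι hχ hv (mem_support_iff.mp he)
    refine ⟨h0, h1, fun _ => ?_⟩
    have hdeg := (le_totalDegree he).trans (totalDegree_weightedSubst_le _ _ v)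
    rw [Finsupp.sum_fintype _ _ (fun _ => rfl), Fin.sum_univ_two] at hdeg
    omega
  set f : MvPolynomial (G ⊕ G) F :=
    ∑ g : G, X (Sum.inl g) ^ orderOf θ * X (Sum.inr g) ^ (orderOf χ - 1)
  have hf (g : G) : rename (g • ·) f = f := by
    simp only [f, map_sum, map_mul, map_pow, rename_X]
    exact Fintype.sum_equiv (Equiv.mulLeft g) _ _ fun _ => rfl
  have hcoeff := coeff_weightedSubst_sum (F := F) hι hχ hθ.ne' (orderOf χ - 1)
  refine (hinvariant hf (mem_support_iff.mpr (hcoeff.trans_ne hH))).2.2 ?_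
  simp

end LowerBound

section CyclicByCyclic

theorem exists_monoidHom_units_orderOf_eq_card {A : Type*} [CommGroup A] [IsCyclic A] [Finite A]
    {K : Type*} [Field K] [IsAlgClosed K] (hA : (Nat.card A : K) ≠ 0) :
    ∃ θ : A →* Kˣ, orderOf θ = Nat.card A := by
  have : NeZero (Monoid.exponent A : K) := ⟨by rwa [IsCyclic.exponent_eq_card]⟩
  obtain ⟨e⟩ := CommGroup.monoidHom_mulEquiv_of_hasEnoughRootsOfUnity A K
  obtain ⟨a, ha⟩ := IsCyclic.exists_ofOrder_eq_natCard (α := A)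
  exact ⟨e.symm a, by rw [e.symm.orderOf_eq, ha]⟩

variable {A B : Type*} [CommGroup A] [CommGroup B] [IsCyclic A] [IsCyclic B] [Finite A] [Finite B]
  (φ : B →* MulAut A)

theorem exists_not_noetherBoundLe_semidirectProduct {F : Type*} [Field F]
    (hF : (Nat.card (A ⋊[φ] B) : F) ≠ 0) :
    ∃ (d : ℕ) (ρ : A ⋊[φ] B →* Matrix.GeneralLinearGroup (Fin d) F),
      ¬NoetherBoundLe ρ (Nat.card A + Nat.card B - 2) := by
  have : Finite (A ⋊[φ] B) := Finite.of_equiv _ SemidirectProduct.equivProd.symm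
  have := Fintype.ofFinite (A ⋊[φ] B)
  have hK : (Nat.card A : AlgebraicClosure F) * Nat.card B ≠ 0 := by
    rwa [← Nat.cast_mul, ← SemidirectProduct.card (φ := φ),
      ← map_natCast (algebraMap F (AlgebraicClosure F)), map_ne_zero]
  obtain ⟨θ, hθ⟩ := exists_monoidHom_units_orderOf_eq_card (left_ne_zero_of_mul hK)
  obtain ⟨χ, hχ⟩ := exists_monoidHom_units_orderOf_eq_card (right_ne_zero_of_mul hK)
  have hχ' : orderOf (χ.comp (SemidirectProduct.rightHom (φ := φ))) = Nat.card B :=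
    (orderOf_injective (MonoidHom.compHom' SemidirectProduct.rightHom)
      (fun _ _ => (MonoidHom.cancel_right SemidirectProduct.rightHom_surjective).mp) χ).trans hχ
  refine ⟨_, permutationRep F (A ⋊[φ] B) (A ⋊[φ] B ⊕ A ⋊[φ] B), ?_⟩
  rw [← hθ, ← hχ']
  refine not_noetherBoundLe_permutationRep SemidirectProduct.inl_injective ?_
    (left_ne_zero_of_mul hK)
  rw [MonoidHom.comp_assoc, SemidirectProduct.rightHom_comp_inl, MonoidHom.comp_one]

theorem exists_productOneFree_semidirectProduct :
    ∃ S : Multiset (A ⋊[φ] B), Multiset.card S = Nat.card A + Nat.card B - 2 ∧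
      ProductOneFree S := by
  obtain ⟨a, ha⟩ := IsCyclic.exists_ofOrder_eq_natCard (α := A)
  obtain ⟨b, hb⟩ := IsCyclic.exists_ofOrder_eq_natCard (α := B)
  refine ⟨_, ?_, productOneFree_replicate_add_replicate SemidirectProduct.rightHom
    (SemidirectProduct.rightHom_inl a) (SemidirectProduct.inr b)⟩
  have hA := Nat.card_pos (α := A)
  have hB := Nat.card_pos (α := B)
  rw [orderOf_injective _ SemidirectProduct.inl_injective, SemidirectProduct.rightHom_inr, ha, hb,
    Multiset.card_add, Multiset.card_replicate, Multiset.card_replicate]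
  omega

end CyclicByCyclic

section Bounds

variable {m n : ℕ} (φ : Multiplicative (ZMod m) →* MulAut (Multiplicative (ZMod (m * n))))

theorem natCard_multiplicative_zmod (N : ℕ) : Nat.card (Multiplicative (ZMod N)) = N :=
  Nat.card_zmod N

theorem natCard_semidirectProduct_zmod :
    Nat.card (Multiplicative (ZMod (m * n)) ⋊[φ] Multiplicative (ZMod m)) = m ^ 2 * n := by
  rw [SemidirectProduct.card, natCard_multiplicative_zmod, natCard_multiplicative_zmod]
  ring

theorem noetherBoundLe_semidirectProduct (hm : m ≠ 0) (hn : n ≠ 0) {F : Type*} [Field F]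
    (hF : ((m ^ 2 * n : ℕ) : F) ≠ 0) {d : ℕ}
    (ρ : Multiplicative (ZMod (m * n)) ⋊[φ] Multiplicative (ZMod m) →*
      Matrix.GeneralLinearGroup (Fin d) F) :
    NoetherBoundLe ρ (m * n + m - 1) := by
  have hcard := natCard_semidirectProduct_zmod φ
  have hm2 : m ^ 2 ≠ 0 := pow_ne_zero 2 hm
  have := Nat.finite_of_card_ne_zero (hcard.trans_ne (mul_ne_zero hm2 hn))
  have tower := elementaryTower_powSubgroup φ m (mul_comm n m).dvd hn (one_mul m) hm
  have hbot : powSubgroup φ (n * m) (1 * m) = ⊥ := by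
    simpa only [natCard_multiplicative_zmod, mul_comm m n, one_mul] using powSubgroup_card_card φ
  rw [hbot] at tower
  have hindex : (powSubgroup φ n 1).index = n := by
    have hindex_mul := (powSubgroup φ n 1).card_mul_index
    rw [tower.card_eq, Subgroup.card_bot, mul_one, hcard] at hindex_mul
    exact mul_left_cancel₀ hm2 hindex_mul
  have hbound := tower.noetherBoundLe (hcard ▸ hF) ρ
  rwa [hindex, add_mul, one_mul, mul_comm n m] at hbound

theorem not_productOneFree_semidirectProduct (hm : m ≠ 0) (hn : n ≠ 0)
    {S : Multiset (Multiplicative (ZMod (m * n)) ⋊[φ] Multiplicative (ZMod m))}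
    (hS : m * n + m - 1 ≤ Multiset.card S) : ¬ProductOneFree S := by
  have hm2 : m ^ 2 ≠ 0 := pow_ne_zero 2 hm
  have tower := elementaryTower_powSubgroup φ m (c := 1) (by simp) one_ne_zero (one_mul m) hm
  rw [powSubgroup_one_one] at tower
  have hcard : Nat.card (powSubgroup φ (1 * m) (1 * m)) = n := by
    have hcard_mul := tower.card_eq
    rw [Subgroup.card_top, natCard_semidirectProduct_zmod] at hcard_mul
    exact (mul_left_cancel₀ hm2 hcard_mul).symm
  have := Nat.finite_of_card_ne_zero (hcard.trans_ne hn)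
  refine tower.not_productOneFree ?_
  rwa [hcard, mul_comm n m]

theorem isGreatest_card_productOneFree_semidirectProduct (hm : m ≠ 0) (hn : n ≠ 0) :
    IsGreatest {c | ∃ S : Multiset (Multiplicative (ZMod (m * n)) ⋊[φ] Multiplicative (ZMod m)),
      Multiset.card S = c ∧ ProductOneFree S} (m * n + m - 2) := by
  have := NeZero.mk hm
  have := NeZero.mk (mul_ne_zero hm hn)
  constructor
  · simpa only [natCard_multiplicative_zmod, Set.mem_ofPred_eq] using
      exists_productOneFree_semidirectProduct φ
  · rintro _ ⟨S, rfl, hS⟩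
    by_contra! hlt
    exact not_productOneFree_semidirectProduct φ hm hn (by omega) hS

end Bounds

/-- For `G = C_m ⋉_φ C_{mn}` (of order `m²n`) and a base field of characteristic
not dividing `|G|`, the Noether number equals `mn + m − 1`: every invariant ring
of a finite dimensional `G`-module is generated in degrees `≤ mn + m − 1`, and
this bound is attained; moreover `β(G) = d(G) + 1`, i.e. the small Davenport
constant equals `mn + m − 2`. -/
theorem noether_number_semidirect (m n : ℕ) (hm : 0 < m) (hn : 0 < n)
    (φ : Multiplicative (ZMod m) →* MulAut (Multiplicative (ZMod (m * n))))
    (F : Type*) [Field F] (hF : ¬ (ringChar F ∣ m ^ 2 * n)) :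
    (∀ (d : ℕ) (ρ : (Multiplicative (ZMod (m * n)) ⋊[φ] Multiplicative (ZMod m)) →*
        Matrix.GeneralLinearGroup (Fin d) F),
      NoetherBoundLe ρ (m * n + m - 1)) ∧
    (∃ (d : ℕ) (ρ : (Multiplicative (ZMod (m * n)) ⋊[φ] Multiplicative (ZMod m)) →*
        Matrix.GeneralLinearGroup (Fin d) F),
      ¬ NoetherBoundLe ρ (m * n + m - 2)) ∧
    ∀ dav : ℕ,
      IsGreatest {c : ℕ |
        ∃ S : Multiset (Multiplicative (ZMod (m * n)) ⋊[φ] Multiplicative (ZMod m)),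
          Multiset.card S = c ∧ ProductOneFree S} dav →
      dav = m * n + m - 2 := by
  have := NeZero.of_pos hm
  have := NeZero.of_pos (mul_pos hm hn)
  have hF' : ((m ^ 2 * n : ℕ) : F) ≠ 0 := fun h => hF ((ringChar.spec F _).mp h)
  refine ⟨fun _ ρ => noetherBoundLe_semidirectProduct φ hm.ne' hn.ne' hF' ρ, ?_, fun dav hdav =>
    hdav.unique (isGreatest_card_productOneFree_semidirectProduct φ hm.ne' hn.ne')⟩
  simpa only [natCard_multiplicative_zmod] using exists_not_noetherBoundLe_semidirectProduct φ
    ((natCard_semidirectProduct_zmod φ).symm ▸ hF')
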